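/- There exist absolute constants C₁, C₂, C₃, C₄ > 0 such that the following holds. Let (X, y) be a λ-anisotropic subgaussian sample of size n in dimension d and let δ ∈ (0, 1/2). If n ≥ C₁ (log(1/δ))², d₂ ≤ C₂ n log n, d_∞ ≥ C₃ n log(1/δ), and d_∞² ≥ C₄ d₂ n, then the probability that support vector proliferation occurs for the ℓ₂-SVM is at most δ. -/

import Mathlib

open MeasureTheory ProbabilityTheory Matrix

noncomputable section

/-- Euclidean norm of a finite real vector. -/
def enorm2 {k : ℕ} (w : Fin k → ℝ) : ℝ := Real.sqrt (∑ j, (w j) ^ 2)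

/-- Feasibility for the hard-margin ℓ₂-SVM problem. -/
def SVMfeas {n d : ℕ} (X : Matrix (Fin n) (Fin d) ℝ) (y : Fin n → ℝ) (w : Fin d → ℝ) : Prop :=
  ∀ i, 1 ≤ y i * (X i ⬝ᵥ w)

/-- Feasibility for the interpolation problem. -/
def Interpfeas {n d : ℕ} (X : Matrix (Fin n) (Fin d) ℝ) (y : Fin n → ℝ) (w : Fin d → ℝ) : Prop :=
  ∀ i, y i * (X i ⬝ᵥ w) = 1

/-- Support vector proliferation: the ℓ₂-SVM problem and the minimum-ℓ₂-norm interpolation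
problem have a common minimizer (equivalently, as both minimizers are unique when they exist,
the two problems have the same solution). -/
def SVPholds {n d : ℕ} (X : Matrix (Fin n) (Fin d) ℝ) (y : Fin n → ℝ) : Prop :=
  ∃ w : Fin d → ℝ,
    SVMfeas X y w ∧ (∀ w', SVMfeas X y w' → enorm2 w ≤ enorm2 w') ∧
    Interpfeas X y w ∧ (∀ w', Interpfeas X y w' → enorm2 w ≤ enorm2 w')

/-- `(X, y)` (with underlying matrix `Z` of independent, mean-zero, unit-variance,
1-subgaussian entries) is a `lam`-anisotropic subgaussian sample: `X = Z diag(lam)^{1/2}`. -/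
structure IsAnisoSample {Ω : Type*} [MeasurableSpace Ω] (μ : Measure Ω)
    {n d : ℕ} (lam : Fin d → ℝ)
    (Z X : Ω → Matrix (Fin n) (Fin d) ℝ) (y : Fin n → ℝ) : Prop where
  lam_pos : ∀ j, 0 < lam j
  labels : ∀ i, y i = 1 ∨ y i = -1
  meas : ∀ i j, Measurable fun ω => Z ω i j
  indep : iIndepFun (fun (p : Fin n × Fin d) ω => Z ω p.1 p.2) μ
  mean_zero : ∀ i j, ∫ ω, Z ω i j ∂μ = 0
  var_one : ∀ i j, ∫ ω, (Z ω i j) ^ 2 ∂μ = 1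
  subg_int : ∀ i j (t : ℝ), Integrable (fun ω => Real.exp (t * Z ω i j)) μ
  subg : ∀ i j (t : ℝ), ∫ ω, Real.exp (t * Z ω i j) ∂μ ≤ Real.exp (t ^ 2 / 2)
  X_eq : ∀ ω i j, X ω i j = Real.sqrt (lam j) * Z ω i j

/-- ℓ₂ dimension proxy `d₂ = ‖λ‖₁²/‖λ‖₂²`. -/
def dim2 {d : ℕ} (lam : Fin d → ℝ) : ℝ := (∑ j, lam j) ^ 2 / ∑ j, (lam j) ^ 2

/-- ℓ∞ dimension proxy `d∞ = ‖λ‖₁/‖λ‖∞`. -/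
def dimInf {d : ℕ} (lam : Fin d → ℝ) : ℝ := (∑ j, lam j) / ⨆ j, lam j

namespace SVPproof

/-- Independent standardized 1-subgaussian family. -/
structure StdFam {Ω ι : Type*} [MeasurableSpace Ω] (μ : Measure Ω) (W : ι → Ω → ℝ) : Prop where
  meas : ∀ i, Measurable (W i)
  indep : iIndepFun W μ
  mean : ∀ i, ∫ ω, W i ω ∂μ = 0
  var : ∀ i, ∫ ω, (W i ω) ^ 2 ∂μ = 1
  int : ∀ i (t : ℝ), Integrable (fun ω => Real.exp (t * W i ω)) μ
  subg : ∀ i (t : ℝ), ∫ ω, Real.exp (t * W i ω) ∂μ ≤ Real.exp (t ^ 2 / 2)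

/-- Subgaussian with variance proxy `s`. -/
structure SG {Ω : Type*} [MeasurableSpace Ω] (μ : Measure Ω) (Y : Ω → ℝ) (s : ℝ) : Prop where
  meas : Measurable Y
  int : ∀ (t : ℝ), Integrable (fun ω => Real.exp (t * Y ω)) μ
  subg : ∀ (t : ℝ), ∫ ω, Real.exp (t * Y ω) ∂μ ≤ Real.exp (t ^ 2 * s / 2)

section basics
variable {Ω : Type*} [MeasurableSpace Ω] {μ : Measure Ω} {ι κ : Type*}

lemma StdFam.precomp {W : ι → Ω → ℝ} (h : StdFam μ W) {g : κ → ι} (hg : g.Injective) :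
    StdFam μ (fun k => W (g k)) :=
  ⟨fun k => h.meas _, h.indep.precomp hg, fun _ => h.mean _, fun _ => h.var _,
    fun _ => h.int _, fun _ => h.subg _⟩

lemma StdFam.sg {W : ι → Ω → ℝ} (h : StdFam μ W) (i : ι) : SG μ (W i) 1 :=
  ⟨h.meas i, h.int i, fun t => by simpa using h.subg i t⟩

lemma SG.pow_int {Y : Ω → ℝ} {s : ℝ} (h : SG μ Y s) (k : ℕ) :
    Integrable (fun ω => (Y ω) ^ k) μ :=
  integrable_pow_of_integrable_exp_mul (t := 1) one_ne_zero (h.int 1) (h.int (-1)) k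

lemma rows_indep [Finite ι] [Finite κ] {Z : ι × κ → Ω → ℝ} (h : StdFam μ Z) :
    iIndepFun (fun i ω (j : κ) => Z (i, j) ω) μ := by
  have := h.indep.isProbabilityMeasure
  have h0 : ∀ p, IsProbabilityMeasure (μ.map (Z p)) :=
    fun p => Measure.isProbabilityMeasure_map (h.meas p).aemeasurable
  have hm := h.meas
  have h1 := (iIndepFun_iff_map_fun_eq_infinitePi_map h.meas).1 h.indep
  rw [iIndepFun_iff_map_fun_eq_infinitePi_map (by fun_prop)]
  have h2 : ∀ i, μ.map (fun ω (j : κ) => Z (i, j) ω) =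
      Measure.infinitePi (fun j => μ.map (Z (i, j))) := fun i =>
    (iIndepFun_iff_map_fun_eq_infinitePi_map (fun j => h.meas _)).1
      (h.indep.precomp (g := fun j : κ => (i, j)) (fun a b hab => by simpa using hab))
  simp_rw [h2]
  have h3 := Measure.infinitePi_map_curry (X := ℝ) (fun (i : ι) (j : κ) => μ.map (Z (i, j)))
  rw [← h3]
  have h4 : Measure.infinitePi (fun p : ι × κ => μ.map (Z (p.1, p.2))) =
      μ.map (fun ω i => Z i ω) := h1.symm
  rw [h4, Measure.map_map (by fun_prop) (by fun_prop)]
  rfl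

lemma cols_indep [Finite ι] [Finite κ] {Z : ι × κ → Ω → ℝ} (h : StdFam μ Z) :
    iIndepFun (fun j ω (i : ι) => Z (i, j) ω) μ :=
  rows_indep (Z := fun p : κ × ι => Z (p.2, p.1)) (h.precomp (g := fun p : κ × ι => (p.2, p.1))
    (fun a b hab => by simpa [Prod.ext_iff, and_comm] using hab))

lemma StdFam.lincomb [Fintype ι] {W : ι → Ω → ℝ} (h : StdFam μ W) (a : ι → ℝ) :
    SG μ (fun ω => ∑ i, a i * W i ω) (∑ i, a i ^ 2) := by
  have := h.indep.isProbabilityMeasure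
  have hm := h.meas
  have hind : iIndepFun (fun i ω => a i * W i ω) μ :=
    h.indep.comp (fun i x => a i * x) (fun i => by fun_prop)
  have hI : ∀ t i, Integrable (fun ω => Real.exp (t * (a i * W i ω))) μ := fun t i => by
    simpa [mul_assoc] using h.int i (t * a i)
  refine ⟨by fun_prop, fun t => ?_, fun t => ?_⟩
  · have := hind.integrable_exp_mul_sum (t := t) (s := Finset.univ) (by fun_prop) (fun i _ => hI t i)
    simpa using this
  · have h1 := hind.mgf_sum (t := t) (by fun_prop) Finset.univ
    simp only [mgf, Finset.sum_apply] at h1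
    rw [h1, Finset.mul_sum, Finset.sum_div, Real.exp_sum]
    refine Finset.prod_le_prod (fun i _ => integral_nonneg fun _ => (Real.exp_pos _).le) fun i _ => ?_
    have := h.subg i (t * a i)
    simpa [mul_assoc, mul_pow] using this

lemma StdFam.lincomb_mgf [Fintype ι] {W : ι → Ω → ℝ} (h : StdFam μ W) (a : ι → ℝ) (t : ℝ) :
    ∫ ω, Real.exp (t * ∑ i, a i * W i ω) ∂μ = ∏ i, ∫ ω, Real.exp ((t * a i) * W i ω) ∂μ := by
  have hm := h.meas
  have hind : iIndepFun (fun i ω => a i * W i ω) μ :=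
    h.indep.comp (fun i x => a i * x) (fun i => by fun_prop)
  have h1 := hind.mgf_sum (t := t) (by fun_prop) Finset.univ
  simpa [mgf, Finset.sum_apply, mul_assoc] using h1

lemma StdFam.lincomb_sq [Fintype ι] {W : ι → Ω → ℝ} (h : StdFam μ W) (a : ι → ℝ) :
    ∫ ω, (∑ i, a i * W i ω) ^ 2 ∂μ = ∑ i, a i ^ 2 := by
  classical
  have := h.indep.isProbabilityMeasure
  have hint1 : ∀ i, Integrable (W i) μ := fun i => by simpa using (h.sg i).pow_int 1
  have hij : ∀ i j, Integrable (fun ω => a i * W i ω * (a j * W j ω)) μ := by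
    intro i j
    by_cases hh : i = j
    · subst hh
      have := ((h.sg i).pow_int 2).const_mul (a i ^ 2)
      refine this.congr (Filter.Eventually.of_forall fun ω => ?_); simp; ring
    · have := ((h.indep.indepFun hh).integrable_mul (hint1 i) (hint1 j)).const_mul (a i * a j)
      refine this.congr (Filter.Eventually.of_forall fun ω => ?_); simp; ring
  have : ∀ ω, (∑ i, a i * W i ω) ^ 2 = ∑ i, ∑ j, a i * W i ω * (a j * W j ω) := fun ω => by
    rw [sq, Finset.sum_mul_sum]
  simp_rw [this]
  rw [integral_finsetSum _ (fun i _ => integrable_finsetSum _ fun j _ => hij i j)]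
  refine Finset.sum_congr rfl fun i _ => ?_
  rw [integral_finsetSum _ (fun j _ => hij i j)]
  rw [Finset.sum_eq_single i]
  · have : ∀ ω, a i * W i ω * (a i * W i ω) = a i ^ 2 * (W i ω) ^ 2 := fun ω => by ring
    simp_rw [this]; rw [integral_const_mul, h.var]; ring
  · intro j _ hj
    have : ∀ ω, a i * W i ω * (a j * W j ω) = (a i * a j) * (W i ω * W j ω) := fun ω => by ring
    simp_rw [this]; rw [integral_const_mul]
    have h2 := (h.indep.indepFun hj.symm).integral_fun_mul_eq_mul_integral
      (h.meas i).aestronglyMeasurable (h.meas j).aestronglyMeasurable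
    rw [h2, h.mean]; simp
  · simp

lemma integral_gauss_sq : ∫⁻ g, ENNReal.ofReal (Real.exp (g ^ 2 / 4)) ∂(gaussianReal 0 1) ≤ 2 := by
  have hi : Integrable (fun x : ℝ => Real.exp (-(1/4) * x ^ 2)) :=
    integrable_exp_neg_mul_sq (by norm_num)
  rw [gaussianReal_of_var_ne_zero _ one_ne_zero,
    lintegral_withDensity_eq_lintegral_mul _ (measurable_gaussianPDF 0 1) (by fun_prop)]
  have : ∀ x : ℝ, (gaussianPDF 0 1 * fun g => ENNReal.ofReal (Real.exp (g ^ 2 / 4))) x =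
      ENNReal.ofReal ((Real.sqrt (2 * Real.pi))⁻¹ * Real.exp (-(1/4) * x ^ 2)) := by
    intro x
    simp only [Pi.mul_apply, gaussianPDF, gaussianPDFReal]
    rw [← ENNReal.ofReal_mul (by positivity), mul_assoc, ← Real.exp_add]
    congr 2
    · simp
    · congr 1; simp; ring
  simp_rw [this]
  rw [← ofReal_integral_eq_lintegral_ofReal (hi.const_mul _)
    (Filter.Eventually.of_forall fun x => by positivity), integral_const_mul, integral_gaussian]
  have h2 : (Real.sqrt (2 * Real.pi))⁻¹ * Real.sqrt (Real.pi / (1 / 4)) ≤ 2 := by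
    have h3 : Real.pi / (1/4) = 2 * (2 * Real.pi) := by ring
    have h4 : 0 < Real.sqrt (2 * Real.pi) := by positivity
    have : Real.sqrt 2 ≤ 2 := by
      rw [Real.sqrt_le_left (by norm_num)]; norm_num
    rw [h3, Real.sqrt_mul (by norm_num) (2 * Real.pi), mul_comm, mul_assoc,
      mul_inv_cancel₀ h4.ne', mul_one]
    exact this
  calc _ ≤ ENNReal.ofReal 2 := ENNReal.ofReal_le_ofReal h2
    _ = 2 := by simp

lemma SG.lexp_sq [IsProbabilityMeasure μ] {Y : Ω → ℝ} {s : ℝ} (h : SG μ Y s) (hs : s ≤ 1) :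
    ∫⁻ ω, ENNReal.ofReal (Real.exp ((Y ω) ^ 2 / 4)) ∂μ ≤ 2 := by
  have hm := h.meas
  have h1 : ∀ y : ℝ, ENNReal.ofReal (Real.exp (y ^ 2 / 4)) =
      ∫⁻ g, ENNReal.ofReal (Real.exp ((y / Real.sqrt 2) * g)) ∂(gaussianReal 0 1) := by
    intro y
    have h2 := mgf_gaussianReal (p := gaussianReal 0 1) (X := id) (μ := 0) (v := 1)
      (by simp) (y / Real.sqrt 2)
    rw [← ofReal_integral_eq_lintegral_ofReal (integrable_exp_mul_gaussianReal _)
      (Filter.Eventually.of_forall fun x => by positivity)]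
    congr 1
    simp only [mgf, id] at h2
    rw [h2, div_pow, Real.sq_sqrt (by norm_num)]
    congr 1; simp; ring
  simp_rw [h1]
  rw [lintegral_lintegral_swap (by fun_prop)]
  refine le_trans (lintegral_mono fun g => ?_) integral_gauss_sq
  have h3 : ∀ ω, Real.exp (Y ω / Real.sqrt 2 * g) = Real.exp ((g / Real.sqrt 2) * Y ω) := fun ω => by
    congr 1; ring
  simp_rw [h3]
  rw [← ofReal_integral_eq_lintegral_ofReal (h.int _)
      (Filter.Eventually.of_forall fun x => by positivity)]
  refine ENNReal.ofReal_le_ofReal ((h.subg _).trans (Real.exp_le_exp.2 ?_))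
  rw [div_pow, Real.sq_sqrt (by norm_num)]
  nlinarith [sq_nonneg g]

lemma SG.int_exp_sq [IsProbabilityMeasure μ] {Y : Ω → ℝ} {s : ℝ} (h : SG μ Y s) (hs : s ≤ 1) :
    Integrable (fun ω => Real.exp ((Y ω) ^ 2 / 4)) μ := by
  have hm := h.meas
  refine ⟨by fun_prop, ?_⟩
  rw [hasFiniteIntegral_iff_ofReal (Filter.Eventually.of_forall fun x => by positivity)]
  exact (h.lexp_sq hs).trans_lt (by simp)

lemma SG.exp_sq [IsProbabilityMeasure μ] {Y : Ω → ℝ} {s : ℝ} (h : SG μ Y s) (hs : s ≤ 1) :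
    ∫ ω, Real.exp ((Y ω) ^ 2 / 4) ∂μ ≤ 2 := by
  have h1 := h.lexp_sq hs
  rw [← ofReal_integral_eq_lintegral_ofReal (h.int_exp_sq hs)
      (Filter.Eventually.of_forall fun x => by positivity)] at h1
  have : (2 : ENNReal) = ENNReal.ofReal 2 := by simp
  rw [this] at h1
  exact (ENNReal.ofReal_le_ofReal_iff (by norm_num)).1 h1

end basics
end SVPproof

namespace SVPproof

section bern
variable {Ω : Type*} [MeasurableSpace Ω] {μ : Measure Ω} {ι κ : Type*}

lemma exp_quad_le (t x : ℝ) (ht : |t| ≤ 1 / 8) (hx : 0 ≤ x) :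
    Real.exp (t * x) ≤ 1 + t * x + 128 * t ^ 2 * Real.exp (x / 4) := by
  have h1 := Complex.norm_exp_sub_sum_le_norm_mul_exp ((t * x : ℝ) : ℂ) 2
  have h2 : Real.exp (t * x) - (1 + t * x) ≤ (t * x) ^ 2 * Real.exp (|t * x|) := by
    have : ((Real.exp (t * x) - (1 + t * x) : ℝ) : ℂ) =
        Complex.exp ((t * x : ℝ) : ℂ) - ∑ m ∈ Finset.range 2, ((t * x : ℝ) : ℂ) ^ m / (m.factorial : ℂ) := by
      simp [Finset.sum_range_succ]
    rw [← this, Complex.norm_real, Complex.norm_real, Real.norm_eq_abs, Real.norm_eq_abs, sq_abs] at h1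
    exact (le_abs_self _).trans h1
  have h3 : |t * x| ≤ x / 8 := by
    rw [abs_mul, abs_of_nonneg hx]; nlinarith
  have h4 : x ^ 2 ≤ 128 * Real.exp (x / 8) := by
    have := Real.quadratic_le_exp_of_nonneg (x := x / 8) (by positivity)
    nlinarith
  have h5 : Real.exp (x / 4) = Real.exp (x / 8) * Real.exp (x / 8) := by
    rw [← Real.exp_add]; congr 1; ring
  have h6 : (t * x) ^ 2 * Real.exp (|t * x|) ≤ t ^ 2 * (128 * Real.exp (x / 8)) * Real.exp (x / 8) := by
    rw [mul_pow]; gcongr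
  rw [h5]; linarith

lemma SG.bern [IsProbabilityMeasure μ] {Y : Ω → ℝ} (h : SG μ Y 1) (hv : ∫ ω, (Y ω) ^ 2 ∂μ = 1)
    {t : ℝ} (ht : |t| ≤ 1 / 8) :
    Integrable (fun ω => Real.exp (t * ((Y ω) ^ 2 - 1))) μ ∧
    ∫ ω, Real.exp (t * ((Y ω) ^ 2 - 1)) ∂μ ≤ Real.exp (256 * t ^ 2) := by
  have hm := h.meas
  have hI := h.int_exp_sq le_rfl
  have h2 := h.pow_int 2
  have hub : Integrable (fun ω => 1 + t * (Y ω) ^ 2 + 128 * t ^ 2 * Real.exp ((Y ω) ^ 2 / 4)) μ :=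
    ((integrable_const _).add (h2.const_mul _)).add (hI.const_mul _)
  have hintg : Integrable (fun ω => Real.exp (t * (Y ω) ^ 2)) μ := by
    refine hub.mono (by fun_prop) (Filter.Eventually.of_forall fun ω => ?_)
    rw [Real.norm_of_nonneg (Real.exp_pos _).le]
    exact (exp_quad_le t _ ht (sq_nonneg _)).trans (le_abs_self _)
  have he : ∀ ω, Real.exp (t * ((Y ω) ^ 2 - 1)) = Real.exp (-t) * Real.exp (t * (Y ω) ^ 2) := fun ω => by
    rw [← Real.exp_add]; congr 1; ring
  simp_rw [he]
  refine ⟨hintg.const_mul _, ?_⟩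
  rw [integral_const_mul]
  have h3 : ∫ ω, Real.exp (t * (Y ω) ^ 2) ∂μ ≤ 1 + t + 128 * t ^ 2 * 2 := by
    refine (integral_mono hintg hub fun ω => exp_quad_le t _ ht (sq_nonneg _)).trans ?_
    have hA : Integrable (fun ω => 1 + t * (Y ω) ^ 2) μ := (integrable_const _).add (h2.const_mul _)
    rw [integral_add hA (hI.const_mul _),
      integral_add (integrable_const _) (h2.const_mul _), integral_const_mul, integral_const_mul, hv]
    have := h.exp_sq le_rfl
    simp only [integral_const, probReal_univ, smul_eq_mul]
    nlinarith [sq_nonneg t]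
  have h4 : 1 + t + 128 * t ^ 2 * 2 ≤ Real.exp (t + 256 * t ^ 2) := by
    have := Real.add_one_le_exp (t + 256 * t ^ 2); linarith
  calc _ ≤ Real.exp (-t) * Real.exp (t + 256 * t ^ 2) := by gcongr; exact h3.trans h4
    _ = _ := by rw [← Real.exp_add]; congr 1; ring

lemma bern_one [IsProbabilityMeasure μ] [Fintype κ] {Y : κ → Ω → ℝ} (hi : iIndepFun Y μ)
    (hY : ∀ j, SG μ (Y j) 1) (hv : ∀ j, ∫ ω, (Y j ω) ^ 2 ∂μ = 1) {ν : κ → ℝ} {M : ℝ} (hM : 0 < M)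
    (hν : ∀ j, 0 ≤ ν j) (hνM : ∀ j, ν j ≤ M) {ε : ℝ} (h0 : 0 < ε) (h1 : ε ≤ 1) (σ : ℝ) (hσ : |σ| = 1) :
    μ.real {ω | ε * ∑ j, ν j ≤ σ * ∑ j, ν j * ((Y j ω) ^ 2 - 1)} ≤
      Real.exp (-(ε ^ 2 * (∑ j, ν j) / (1024 * M))) := by
  have hm := fun j => (hY j).meas
  set s : ℝ := ε / (512 * M) with hs
  have hs0 : 0 < s := by positivity
  have hsν : ∀ j, |s * σ * ν j| ≤ 1 / 8 := by
    intro j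
    rw [abs_mul, abs_mul, hσ, abs_of_pos hs0, abs_of_nonneg (hν j), mul_one]
    calc s * ν j ≤ s * M := by gcongr; exact hνM j
      _ = ε / 512 := by rw [hs]; field_simp
      _ ≤ 1 / 8 := by linarith
  have hb := fun j => (hY j).bern (hv j) (hsν j)
  set T : κ → Ω → ℝ := fun j ω => σ * (ν j * ((Y j ω) ^ 2 - 1)) with hT
  have hind : iIndepFun T μ := hi.comp (fun j x => σ * (ν j * (x ^ 2 - 1))) (fun j => by fun_prop)
  have hTm : ∀ j, Measurable (T j) := fun j => by simp only [hT]; fun_prop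
  have heq : ∀ j ω, s * T j ω = s * σ * ν j * ((Y j ω) ^ 2 - 1) := fun j ω => by simp only [hT]; ring
  have hintg := hind.integrable_exp_mul_sum (t := s) (s := Finset.univ) hTm (fun j _ => by
    simp_rw [heq]; exact (hb j).1)
  have hmg := hind.mgf_sum (t := s) hTm Finset.univ
  have hch := measure_ge_le_exp_mul_mgf (μ := μ) (X := ∑ j, T j) (ε * ∑ j, ν j) hs0.le hintg
  have e1 : ∀ ω, σ * ∑ j, ν j * ((Y j ω) ^ 2 - 1) = (∑ j, T j) ω := fun ω => by
    simp [hT, Finset.mul_sum]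
  simp_rw [e1]
  refine hch.trans ?_
  rw [hmg]
  have h2 : ∏ j, mgf (T j) μ s ≤ Real.exp (∑ j, 256 * (s * σ * ν j) ^ 2) := by
    rw [Real.exp_sum]
    refine Finset.prod_le_prod (fun j _ => mgf_nonneg) fun j _ => ?_
    simp only [mgf]
    simp_rw [heq]
    exact (hb j).2
  have hσ2 : σ ^ 2 = 1 := by rw [← sq_abs, hσ]; norm_num
  have h3 : ∑ j, 256 * (s * σ * ν j) ^ 2 ≤ 256 * s ^ 2 * (M * ∑ j, ν j) := by
    rw [Finset.mul_sum, Finset.mul_sum]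
    refine Finset.sum_le_sum fun j _ => ?_
    have : 256 * (s * σ * ν j) ^ 2 = 256 * s ^ 2 * (ν j * ν j) := by
      rw [mul_pow, mul_pow, hσ2]; ring
    rw [this]
    have := hν j; have := hνM j
    gcongr
  calc _ ≤ Real.exp (-s * (ε * ∑ j, ν j)) * Real.exp (256 * s ^ 2 * (M * ∑ j, ν j)) := by
        gcongr; exact h2.trans (Real.exp_le_exp.2 h3)
    _ = _ := by
        rw [← Real.exp_add]; congr 1; rw [hs]; field_simp; ring

lemma bern_tail [IsProbabilityMeasure μ] [Fintype κ] {Y : κ → Ω → ℝ} (hi : iIndepFun Y μ)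
    (hY : ∀ j, SG μ (Y j) 1) (hv : ∀ j, ∫ ω, (Y j ω) ^ 2 ∂μ = 1) {ν : κ → ℝ} {M : ℝ} (hM : 0 < M)
    (hν : ∀ j, 0 ≤ ν j) (hνM : ∀ j, ν j ≤ M) {ε : ℝ} (h0 : 0 < ε) (h1 : ε ≤ 1) :
    μ.real {ω | ε * ∑ j, ν j ≤ |∑ j, ν j * ((Y j ω) ^ 2 - 1)|} ≤
      2 * Real.exp (-(ε ^ 2 * (∑ j, ν j) / (1024 * M))) := by
  have a := bern_one hi hY hv hM hν hνM h0 h1 1 (by simp)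
  have b := bern_one hi hY hv hM hν hνM h0 h1 (-1) (by simp)
  refine (measureReal_mono (s₂ := {ω | ε * ∑ j, ν j ≤ 1 * ∑ j, ν j * ((Y j ω) ^ 2 - 1)} ∪
    {ω | ε * ∑ j, ν j ≤ -1 * ∑ j, ν j * ((Y j ω) ^ 2 - 1)}) ?_).trans
    ((measureReal_union_le _ _).trans (by linarith))
  intro ω hω
  simp only [Set.mem_ofPred_eq, Set.mem_union, one_mul, neg_mul] at hω ⊢
  rcases abs_cases (∑ j, ν j * ((Y j ω) ^ 2 - 1)) with h | h
  · left; linarith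
  · right; linarith

/-- bilinear discrepancy -/
def Bil [Fintype ι] [Fintype κ] (z : ι → κ → ℝ) (ν : κ → ℝ) (x y : ι → ℝ) : ℝ :=
  ∑ j, ν j * (∑ k, x k * z k j) * (∑ k, y k * z k j) - (∑ j, ν j) * ∑ k, x k * y k

lemma Bil_polar [Fintype ι] [Fintype κ] (z : ι → κ → ℝ) (ν : κ → ℝ) (x y : ι → ℝ) :
    Bil z ν x y = (Bil z ν (x + y) (x + y) - Bil z ν (x - y) (x - y)) / 4 := by
  have e1 : ∀ j, ∑ k, (x + y) k * z k j = (∑ k, x k * z k j) + ∑ k, y k * z k j := fun j => by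
    simp [add_mul, Finset.sum_add_distrib]
  have e2 : ∀ j, ∑ k, (x - y) k * z k j = (∑ k, x k * z k j) - ∑ k, y k * z k j := fun j => by
    simp [sub_mul, Finset.sum_sub_distrib]
  unfold Bil
  simp_rw [e1, e2]
  have e3 : ∑ k, (x + y) k * (x + y) k = ∑ k, (x - y) k * (x - y) k + 4 * ∑ k, x k * y k := by
    rw [Finset.mul_sum, ← Finset.sum_add_distrib]
    refine Finset.sum_congr rfl fun k _ => ?_
    simp; ring
  have e4 : ∑ j, ν j * ((∑ k, x k * z k j) + ∑ k, y k * z k j) * ((∑ k, x k * z k j) + ∑ k, y k * z k j)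
    = ∑ j, ν j * ((∑ k, x k * z k j) - ∑ k, y k * z k j) * ((∑ k, x k * z k j) - ∑ k, y k * z k j)
     + 4 * ∑ j, ν j * (∑ k, x k * z k j) * (∑ k, y k * z k j) := by
    rw [Finset.mul_sum, ← Finset.sum_add_distrib]
    refine Finset.sum_congr rfl fun k _ => ?_
    ring
  rw [e3, e4]; ring

lemma Bil_quad_tail [Fintype ι] [Fintype κ] {Z : ι × κ → Ω → ℝ} (h : StdFam μ Z)
    {ν : κ → ℝ} {M : ℝ} (hM : 0 < M) (hν : ∀ j, 0 ≤ ν j) (hνM : ∀ j, ν j ≤ M) {ε : ℝ} (h0 : 0 < ε)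
    (h1 : ε ≤ 1) (x : ι → ℝ) :
    μ.real {ω | ε * (∑ j, ν j) * (∑ k, x k ^ 2) < |Bil (fun k j => Z (k, j) ω) ν x x|} ≤
      2 * Real.exp (-(ε ^ 2 * (∑ j, ν j) / (1024 * M))) := by
  have := h.indep.isProbabilityMeasure
  set N : ℝ := ∑ k, x k ^ 2 with hN
  have hN0 : 0 ≤ N := Finset.sum_nonneg fun k _ => sq_nonneg _
  rcases hN0.eq_or_lt with h' | hNpos
  · have hx : ∀ k, x k = 0 := by
      intro k
      have := (Finset.sum_eq_zero_iff_of_nonneg (fun k _ => sq_nonneg (x k))).1 (hN.symm.trans h'.symm) k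
        (Finset.mem_univ _)
      simpa using this
    have : {ω | ε * (∑ j, ν j) * N < |Bil (fun k j => Z (k, j) ω) ν x x|} = ∅ := by
      ext ω; simp [Bil, hx, ← h']
    rw [this]; simp; positivity
  · set r := Real.sqrt N with hr
    have hr0 : 0 < r := Real.sqrt_pos.2 hNpos
    have hr2 : r ^ 2 = N := Real.sq_sqrt hN0
    have hx1 : ∑ k, (x k / r) ^ 2 = 1 := by
      simp_rw [div_pow]; rw [← Finset.sum_div, hr2, ← hN]; field_simp
    have hcol : ∀ j, StdFam μ (fun k => Z (k, j)) := fun j =>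
      h.precomp (g := fun k => (k, j)) (fun a b hab => by simpa using hab)
    set Y : κ → Ω → ℝ := fun j ω => ∑ k, (x k / r) * Z (k, j) ω with hYd
    have hY : ∀ j, SG μ (Y j) 1 := fun j => by
      have := (hcol j).lincomb (fun k => x k / r)
      rwa [hx1] at this
    have hv : ∀ j, ∫ ω, (Y j ω) ^ 2 ∂μ = 1 := fun j => by
      have := (hcol j).lincomb_sq (fun k => x k / r)
      rwa [hx1] at this
    have hi : iIndepFun Y μ :=
      (cols_indep h).comp (fun j (v : ι → ℝ) => ∑ k, (x k / r) * v k) (fun j => by fun_prop)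
    refine (measureReal_mono ?_).trans (bern_tail hi hY hv hM hν hνM h0 h1)
    intro ω hω
    simp only [Set.mem_ofPred_eq] at hω ⊢
    have e1 : ∀ j, ∑ k, x k * Z (k, j) ω = r * Y j ω := fun j => by
      simp only [hYd, Finset.mul_sum]
      refine Finset.sum_congr rfl fun k _ => ?_
      field_simp
    have e2 : Bil (fun k j => Z (k, j) ω) ν x x = N * ∑ j, ν j * ((Y j ω) ^ 2 - 1) := by
      unfold Bil
      simp_rw [e1]
      have : ∑ k, x k * x k = N := by rw [hN]; exact Finset.sum_congr rfl fun k _ => by ring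
      clear_value N
      rw [this, Finset.mul_sum, Finset.sum_mul, ← Finset.sum_sub_distrib]
      refine Finset.sum_congr rfl fun k _ => ?_
      rw [← hr2]; ring
    rw [e2, abs_mul, abs_of_pos hNpos] at hω
    have : N * (ε * ∑ j, ν j) < N * |∑ j, ν j * ((Y j ω) ^ 2 - 1)| := by linarith
    exact (lt_of_mul_lt_mul_left this hN0).le

end bern

section net
open Module

lemma exists_net (V : Type*) [NormedAddCommGroup V] [NormedSpace ℝ V] [FiniteDimensional ℝ V] :
    ∃ N : Finset V, N.card ≤ 5 ^ finrank ℝ V ∧ (∀ z ∈ N, ‖z‖ ≤ 1) ∧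
      ∀ x : V, ‖x‖ ≤ 1 → ∃ z ∈ N, ‖x - z‖ ≤ 1 / 2 := by
  classical
  let Pr : Finset V → Prop := fun s => (∀ c ∈ s, ‖c‖ ≤ 2) ∧ ∀ c ∈ s, ∀ d ∈ s, c ≠ d → 1 ≤ ‖c - d‖
  let Q : ℕ → Prop := fun k => ∃ s, Pr s ∧ s.card = k
  have hb : ∀ k, Q k → k ≤ 5 ^ finrank ℝ V := by
    rintro k ⟨s, hs, rfl⟩
    exact Besicovitch.card_le_of_separated s hs.1 hs.2
  have hQ0 : Q 0 := ⟨∅, by simp [Pr], by simp⟩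
  obtain ⟨s, hs, hcard⟩ : Q (Nat.findGreatest Q (5 ^ finrank ℝ V)) :=
    Nat.findGreatest_spec (Nat.zero_le _) hQ0
  have hmax : ∀ t, Pr t → t.card ≤ s.card := fun t ht => by
    rw [hcard]; exact Nat.le_findGreatest (hb _ ⟨t, ht, rfl⟩) ⟨t, ht, rfl⟩
  refine ⟨s.image (fun c => (1 / 2 : ℝ) • c), ?_, ?_, ?_⟩
  · exact Finset.card_image_le.trans (Besicovitch.card_le_of_separated s hs.1 hs.2)
  · intro z hz
    obtain ⟨c, hc, rfl⟩ := Finset.mem_image.1 hz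
    rw [norm_smul]; have := hs.1 c hc; norm_num; linarith
  · intro x hx
    have hx2 : ‖(2 : ℝ) • x‖ ≤ 2 := by rw [norm_smul]; norm_num; linarith
    have : ∃ c ∈ s, ‖(2 : ℝ) • x - c‖ ≤ 1 := by
      by_contra! hcon
      have hnot : (2 : ℝ) • x ∉ s := fun hmem => by have := hcon _ hmem; simp at this; linarith
      have := hmax (insert ((2 : ℝ) • x) s) ⟨?_, ?_⟩
      · rw [Finset.card_insert_of_notMem hnot] at this; omega
      · intro c hc
        rcases Finset.mem_insert.1 hc with rfl | hc
        · exact hx2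
        · exact hs.1 c hc
      · intro c hc d hd hne
        rcases Finset.mem_insert.1 hc with rfl | hc <;> rcases Finset.mem_insert.1 hd with rfl | hd
        · exact absurd rfl hne
        · exact (hcon d hd).le
        · rw [norm_sub_rev]; exact (hcon c hc).le
        · exact hs.2 c hc d hd hne
    obtain ⟨c, hc, h1⟩ := this
    refine ⟨(1 / 2 : ℝ) • c, Finset.mem_image_of_mem _ hc, ?_⟩
    have : x - (1 / 2 : ℝ) • c = (1 / 2 : ℝ) • ((2 : ℝ) • x - c) := by
      rw [smul_sub, smul_smul]; norm_num
    rw [this, norm_smul]; norm_num; linarith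

lemma net_opNorm {V : Type*} [NormedAddCommGroup V] [InnerProductSpace ℝ V]
    {N : Finset V} (hN : ∀ x : V, ‖x‖ ≤ 1 → ∃ z ∈ N, ‖x - z‖ ≤ 1 / 2) (E : V →L[ℝ] V) {c : ℝ}
    (hc : 0 ≤ c)
    (h : ∀ z ∈ N, ∀ w ∈ N, |inner ℝ z (E w)| ≤ c) : ‖E‖ ≤ 4 * c := by
  have s1 : ∀ w ∈ N, ‖E w‖ ≤ 2 * c := by
    intro w hw
    set v := E w with hv
    rcases eq_or_ne v 0 with h0 | h0
    · rw [h0]; simp; exact hc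
    have hp : 0 < ‖v‖ := norm_pos_iff.2 h0
    obtain ⟨z, hz, hxz⟩ := hN (‖v‖⁻¹ • v) (by rw [norm_smul]; simp [hp.ne'])
    have e1 : inner ℝ (‖v‖⁻¹ • v) v = ‖v‖ := by
      rw [real_inner_smul_left, real_inner_self_eq_norm_sq]; field_simp
    have e2 : inner ℝ (‖v‖⁻¹ • v) v = inner ℝ z v + inner ℝ (‖v‖⁻¹ • v - z) v := by
      rw [inner_sub_left]; ring
    have e3 := (le_abs_self _).trans (abs_real_inner_le_norm (‖v‖⁻¹ • v - z) v)
    have e4 := (le_abs_self _).trans (h z hz w hw)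
    nlinarith
  have s2 : ‖E‖ ≤ 2 * c + ‖E‖ / 2 := by
    refine ContinuousLinearMap.opNorm_le_of_unit_norm (by positivity) fun x hx => ?_
    obtain ⟨z, hz, hxz⟩ := hN x hx.le
    have : E x = E z + E (x - z) := by rw [map_sub]; abel
    rw [this]
    refine (norm_add_le _ _).trans ?_
    have h1 := s1 z hz
    have h2 := E.le_opNorm (x - z)
    have h3 := norm_nonneg E
    nlinarith
  linarith

end net

section opev
variable {Ω : Type*} [MeasurableSpace Ω] {μ : Measure Ω} {ι κ : Type*}

/-- operator norm event -/
def OpEv [Fintype ι] [Fintype κ] (z : ι → κ → ℝ) (ν : κ → ℝ) (c : ℝ) : Prop :=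
  ∀ x y : ι → ℝ, |Bil z ν x y| ≤ c * (∑ j, ν j) * Real.sqrt (∑ k, x k ^ 2) * Real.sqrt (∑ k, y k ^ 2)

lemma OpEv_of_net [Fintype ι] [Fintype κ] {z : ι → κ → ℝ} {ν : κ → ℝ} {ε : ℝ} (h0 : 0 < ε)
    (hν : ∀ j, 0 ≤ ν j)
    {N : Finset (EuclideanSpace ℝ ι)}
    (hN : ∀ x : EuclideanSpace ℝ ι, ‖x‖ ≤ 1 → ∃ z ∈ N, ‖x - z‖ ≤ 1 / 2)
    (h : ∀ x ∈ N, ∀ y ∈ N, |Bil z ν x y| ≤ ε * ∑ j, ν j) : OpEv z ν (4 * ε) := by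
  set N1 := ∑ j, ν j with hN1
  have hN10 : 0 ≤ N1 := Finset.sum_nonneg fun j _ => hν j
  let c : κ → EuclideanSpace ℝ ι := fun j => WithLp.toLp 2 (fun k => z k j)
  let E : EuclideanSpace ℝ ι →L[ℝ] EuclideanSpace ℝ ι :=
    ∑ j, ν j • (innerSL ℝ (c j)).smulRight (c j) - N1 • ContinuousLinearMap.id ℝ _
  have hE : ∀ x y : EuclideanSpace ℝ ι, inner ℝ x (E y) = Bil z ν x y := by
    intro x y
    have hc : ∀ (j) (x : EuclideanSpace ℝ ι), inner ℝ (c j) x = ∑ k, x k * z k j := fun j x => by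
      simp [c, PiLp.inner_apply]
    have hxy : inner ℝ x y = ∑ k, x k * y k := by
      simp [PiLp.inner_apply, mul_comm]
    simp only [E, _root_.sub_apply, _root_.sum_apply, inner_sub_right,
      inner_sum, _root_.smul_apply, ContinuousLinearMap.smulRight_apply, innerSL_apply_apply,
      real_inner_smul_right, ContinuousLinearMap.id_apply, Bil, hxy]
    congr 1
    refine Finset.sum_congr rfl fun j _ => ?_
    rw [real_inner_comm (c j) x, hc, hc]; ring
  have hop := net_opNorm hN E (c := ε * N1) (by positivity) (fun x hx y hy => by rw [hE]; exact h x hx y hy)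
  intro x y
  have := hE (WithLp.toLp 2 x) (WithLp.toLp 2 y)
  simp only at this
  rw [← this]
  refine (abs_real_inner_le_norm _ _).trans ?_
  have h1 := E.le_opNorm (WithLp.toLp 2 y)
  have e1 : ‖(WithLp.toLp 2 x : EuclideanSpace ℝ ι)‖ = Real.sqrt (∑ k, x k ^ 2) := by
    rw [EuclideanSpace.norm_eq]; simp
  have e2 : ‖(WithLp.toLp 2 y : EuclideanSpace ℝ ι)‖ = Real.sqrt (∑ k, y k ^ 2) := by
    rw [EuclideanSpace.norm_eq]; simp
  rw [← e1, ← e2]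
  calc _ ≤ ‖(WithLp.toLp 2 x : EuclideanSpace ℝ ι)‖ * (4 * (ε * N1) * ‖(WithLp.toLp 2 y : EuclideanSpace ℝ ι)‖) := by
        gcongr; exact h1.trans (by gcongr)
    _ = _ := by ring

lemma OpEv_prob [Fintype ι] [Fintype κ] {Z : ι × κ → Ω → ℝ} (h : StdFam μ Z)
    {ν : κ → ℝ} {M : ℝ} (hM : 0 < M) (hν : ∀ j, 0 ≤ ν j) (hνM : ∀ j, ν j ≤ M) {ε : ℝ} (h0 : 0 < ε)
    (h1 : ε ≤ 1) :
    μ.real {ω | ¬ OpEv (fun k j => Z (k, j) ω) ν (4 * ε)} ≤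
      25 ^ (Fintype.card ι) * (4 * Real.exp (-(ε ^ 2 * (∑ j, ν j) / (1024 * M)))) := by
  classical
  have := h.indep.isProbabilityMeasure
  obtain ⟨N, hcard, hN1, hN⟩ := exists_net (EuclideanSpace ℝ ι)
  rw [finrank_euclideanSpace] at hcard
  set R := Real.exp (-(ε ^ 2 * (∑ j, ν j) / (1024 * M))) with hR
  have hR0 : 0 < R := Real.exp_pos _
  have hs : 0 ≤ ∑ j, ν j := Finset.sum_nonneg fun j _ => hν j
  let bad : (ι → ℝ) → Set Ω := fun x =>
    {ω | ε * (∑ j, ν j) * (∑ k, x k ^ 2) < |Bil (fun k j => Z (k, j) ω) ν x x|}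
  have hsub : {ω | ¬ OpEv (fun k j => Z (k, j) ω) ν (4 * ε)} ⊆
      ⋃ p ∈ N ×ˢ N, (bad ((p.1 : ι → ℝ) + p.2) ∪ bad ((p.1 : ι → ℝ) - p.2)) := by
    intro ω hω
    by_contra hcon
    simp only [Set.mem_iUnion, not_exists, Set.mem_union, not_or] at hcon
    refine hω (OpEv_of_net h0 hν hN fun x hx y hy => ?_)
    obtain ⟨ha, hb⟩ := hcon (x, y) (Finset.mem_product.2 ⟨hx, hy⟩)
    simp only [bad, Set.mem_ofPred_eq, not_lt] at ha hb
    rw [Bil_polar]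
    have hnx : ∑ k, x k ^ 2 ≤ 1 := by
      have := hN1 x hx; rw [EuclideanSpace.norm_eq] at this
      simpa using (Real.sqrt_le_left zero_le_one).1 this
    have hny : ∑ k, y k ^ 2 ≤ 1 := by
      have := hN1 y hy; rw [EuclideanSpace.norm_eq] at this
      simpa using (Real.sqrt_le_left zero_le_one).1 this
    have hpar : ∑ k, ((x : ι → ℝ) + y) k ^ 2 + ∑ k, ((x : ι → ℝ) - y) k ^ 2 =
        2 * ∑ k, x k ^ 2 + 2 * ∑ k, y k ^ 2 := by
      rw [Finset.mul_sum, Finset.mul_sum, ← Finset.sum_add_distrib, ← Finset.sum_add_distrib]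
      refine Finset.sum_congr rfl fun k _ => ?_
      simp; ring
    rw [abs_div]
    have h4 : |(4 : ℝ)| = 4 := by norm_num
    rw [h4]
    have := abs_sub (Bil (fun k j => Z (k, j) ω) ν ((x : ι → ℝ) + y) ((x : ι → ℝ) + y))
      (Bil (fun k j => Z (k, j) ω) ν ((x : ι → ℝ) - y) ((x : ι → ℝ) - y))
    have h5 : 0 ≤ ε * ∑ j, ν j := by positivity
    have h6 : ε * (∑ j, ν j) * (∑ k, ((x : ι → ℝ) + y) k ^ 2) + ε * (∑ j, ν j) * (∑ k, ((x : ι → ℝ) - y) k ^ 2)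
        ≤ ε * (∑ j, ν j) * 4 := by
      rw [← mul_add, hpar]; gcongr; linarith
    linarith
  refine (measureReal_mono hsub (measure_ne_top _ _)).trans ((measureReal_biUnion_finset_le _ _).trans ?_)
  have hb : ∀ x, μ.real (bad x) ≤ 2 * R := fun x => Bil_quad_tail h hM hν hνM h0 h1 x
  calc _ ≤ ∑ p ∈ N ×ˢ N, (4 * R) := Finset.sum_le_sum fun p _ =>
        (measureReal_union_le _ _).trans (by linarith [hb ((p.1 : ι → ℝ) + p.2), hb ((p.1 : ι → ℝ) - p.2)])
    _ = (N.card * N.card : ℕ) * (4 * R) := by simp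
    _ ≤ ((5 ^ Fintype.card ι * 5 ^ Fintype.card ι : ℕ) : ℝ) * (4 * R) := by gcongr
    _ = _ := by push_cast; rw [← mul_pow]; norm_num

end opev
end SVPproof

namespace SVPproof

section anti
variable {Ω : Type*} [MeasurableSpace Ω] {μ : Measure Ω} {ι κ : Type*}

lemma cubic_le_exp (y : ℝ) : 1 + y + y ^ 2 / 2 + y ^ 3 / 6 ≤ Real.exp y := by
  rcases le_total 0 y with hy | hy
  · have := Real.sum_le_exp_of_nonneg hy 4
    simp [Finset.sum_range_succ, Nat.factorial] at this
    linarith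
  · have m2 : Monotone (fun y : ℝ => Real.exp y - (1 + y + y ^ 2 / 2)) := by
      refine monotone_of_deriv_nonneg (by fun_prop) fun x => ?_
      have : HasDerivAt (fun y : ℝ => Real.exp y - (1 + y + y ^ 2 / 2)) (Real.exp x - (1 + 2 * x / 2)) x := by
        refine (Real.hasDerivAt_exp x).sub (((hasDerivAt_id x).const_add 1).add ?_)
        simpa using (hasDerivAt_pow 2 x).div_const 2
      rw [this.deriv]
      have := Real.add_one_le_exp x
      linarith
    have h2 : ∀ x ≤ (0 : ℝ), Real.exp x - (1 + x + x ^ 2 / 2) ≤ 0 := fun x hx => by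
      have := m2 hx; simpa using this
    have m3 : AntitoneOn (fun y : ℝ => Real.exp y - (1 + y + y ^ 2 / 2 + y ^ 3 / 6)) (Set.Iic 0) := by
      refine antitoneOn_of_deriv_nonpos (convex_Iic 0) (by fun_prop) (by fun_prop) fun x hx => ?_
      rw [interior_Iic] at hx
      have : HasDerivAt (fun y : ℝ => Real.exp y - (1 + y + y ^ 2 / 2 + y ^ 3 / 6))
          (Real.exp x - (1 + 2 * x / 2 + 3 * x ^ 2 / 6)) x := by
        refine (Real.hasDerivAt_exp x).sub ((((hasDerivAt_id x).const_add 1).add ?_).add ?_)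
        · simpa using (hasDerivAt_pow 2 x).div_const 2
        · simpa using (hasDerivAt_pow 3 x).div_const 6
      rw [this.deriv]
      have := h2 x (le_of_lt hx)
      linarith
    have := m3 (Set.mem_Iic.2 hy) (Set.mem_Iic.2 le_rfl) hy
    simp at this; linarith

lemma cube_le (z : ℝ) : |z ^ 3| ≤ 4 * Real.exp (z ^ 2 / 4) := by
  have h := cubic_le_exp (z ^ 2 / 4)
  have h1 : |z ^ 3| ≤ z ^ 2 * (1 + z ^ 2 / 4) := by
    rw [pow_succ, abs_mul, abs_of_nonneg (sq_nonneg z)]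
    have : |z| ≤ 1 + z ^ 2 / 4 := by
      rw [← sq_abs]; nlinarith [sq_nonneg (|z| / 2 - 1)]
    gcongr
  set v := z ^ 2 / 4 with hv
  have hv0 : 0 ≤ v := by positivity
  have h2 : z ^ 2 = 4 * v := by rw [hv]; ring
  rw [h2] at h1
  nlinarith [mul_nonneg hv0 (sq_nonneg (v - 2)), sq_nonneg (v - 2), mul_nonneg (add_nonneg hv0 zero_le_one) (sq_nonneg (v - 2))]

lemma SG.mgf_ge_one [IsProbabilityMeasure μ] {Y : Ω → ℝ} (h : SG μ Y 1) (h0 : ∫ ω, Y ω ∂μ = 0) (x : ℝ) :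
    1 ≤ ∫ ω, Real.exp (x * Y ω) ∂μ := by
  have h1 : Integrable Y μ := by simpa using h.pow_int 1
  have hA : Integrable (fun ω => 1 + x * Y ω) μ := (integrable_const _).add (h1.const_mul _)
  have := integral_mono hA (h.int x) (fun ω => by
    have := Real.add_one_le_exp (x * Y ω); simp only; linarith)
  rw [integral_add (integrable_const _) (h1.const_mul _), integral_const_mul, h0] at this
  simpa using this

lemma SG.mgf_ge [IsProbabilityMeasure μ] {Y : Ω → ℝ} (h : SG μ Y 1) (h0 : ∫ ω, Y ω ∂μ = 0)
    (hv : ∫ ω, (Y ω) ^ 2 ∂μ = 1) {x : ℝ} (hx : |x| ≤ 1 / 16) :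
    Real.exp (x ^ 2 / 8) ≤ ∫ ω, Real.exp (x * Y ω) ∂μ := by
  have h1 : Integrable Y μ := by simpa using h.pow_int 1
  have h2 := h.pow_int 2
  have h3 := h.pow_int 3
  have c3 : |∫ ω, (Y ω) ^ 3 ∂μ| ≤ 8 := by
    refine (abs_integral_le_integral_abs).trans ?_
    have := integral_mono h3.abs ((h.int_exp_sq le_rfl).const_mul 4) (fun ω => cube_le (Y ω))
    rw [integral_const_mul] at this
    linarith [h.exp_sq le_rfl]
  have hA : Integrable (fun ω => 1 + x * Y ω) μ := (integrable_const _).add (h1.const_mul _)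
  have hB : Integrable (fun ω => 1 + x * Y ω + x ^ 2 / 2 * (Y ω) ^ 2) μ := hA.add (h2.const_mul _)
  have hC : Integrable (fun ω => 1 + x * Y ω + x ^ 2 / 2 * (Y ω) ^ 2 + x ^ 3 / 6 * (Y ω) ^ 3) μ :=
    hB.add (h3.const_mul _)
  have := integral_mono hC (h.int x) (fun ω => by
    have := cubic_le_exp (x * Y ω); simp only; linarith)
  rw [integral_add hB (h3.const_mul _), integral_add hA (h2.const_mul _),
    integral_add (integrable_const _) (h1.const_mul _), integral_const_mul, integral_const_mul,
    integral_const_mul, h0, hv] at this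
  simp only [integral_const, probReal_univ, smul_eq_mul] at this
  have h4 : -(x ^ 2 / 12) ≤ x ^ 3 / 6 * ∫ ω, (Y ω) ^ 3 ∂μ := by
    have : |x ^ 3 / 6 * ∫ ω, (Y ω) ^ 3 ∂μ| ≤ x ^ 2 / 12 := by
      rw [abs_mul, abs_div, pow_succ, abs_mul, abs_of_nonneg (sq_nonneg x)]
      have h6 : |(6 : ℝ)| = 6 := by norm_num
      rw [h6]
      calc _ ≤ x ^ 2 * (1 / 16) / 6 * 8 := by gcongr
        _ = _ := by ring
    linarith [neg_abs_le (x ^ 3 / 6 * ∫ ω, (Y ω) ^ 3 ∂μ)]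
  refine le_trans ?_ (le_trans ?_ this) (b := 1 + x ^ 2 / 4)
  · have hx2 : x ^ 2 ≤ 1 := by
      rw [← sq_abs]; have := abs_nonneg x; nlinarith
    have := Real.add_one_le_exp (-(x ^ 2 / 8))
    have hp := Real.exp_pos (x ^ 2 / 8)
    have : Real.exp (x ^ 2 / 8) * Real.exp (-(x ^ 2 / 8)) = 1 := by rw [← Real.exp_add]; simp
    have h7 : Real.exp (x ^ 2 / 8) * (1 - x ^ 2 / 8) ≤ 1 := by
      rw [← this]; gcongr; linarith
    have h8 : 1 ≤ (1 + x ^ 2 / 4) * (1 - x ^ 2 / 8) := by nlinarith [sq_nonneg x]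
    have h9 : 0 < 1 - x ^ 2 / 8 := by linarith
    exact le_of_mul_le_mul_right (h7.trans h8) h9
  · nlinarith [sq_nonneg x]

open Classical in
lemma anticonc [IsProbabilityMeasure μ] [Fintype κ] {W : κ → Ω → ℝ} (h : StdFam μ W) (q : κ → ℝ)
    {θ : ℝ} (hθ : 1 ≤ θ) (hV : 48 ≤ θ * ∑ j, q j ^ 2)
    (hbad : (∑ j, q j ^ 2) / 2 ≤ ∑ j, if |θ * q j| ≤ 1 / 16 then q j ^ 2 else 0) :
    1 / 4 * Real.exp (-(2 * θ ^ 2 * ∑ j, q j ^ 2)) ≤ μ.real {ω | 2 ≤ ∑ j, q j * W j ω} := by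
  set V := ∑ j, q j ^ 2 with hVd
  set Y : Ω → ℝ := fun ω => ∑ j, q j * W j ω with hY
  have hSG := h.lincomb q
  have hYm : Measurable Y := hSG.meas
  have hAm : MeasurableSet {ω | 2 ≤ Y ω} := measurableSet_le measurable_const hYm
  set F := ∫ ω, Real.exp (θ * Y ω) ∂μ with hF
  set S := ∫ ω, Real.exp (2 * θ * Y ω) ∂μ with hS
  have hF1 : Real.exp (θ ^ 2 * V / 16) ≤ F := by
    rw [hF, h.lincomb_mgf q θ]
    calc _ ≤ Real.exp (∑ j, if |θ * q j| ≤ 1 / 16 then (θ * q j) ^ 2 / 8 else 0) := by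
          refine Real.exp_le_exp.2 ?_
          have : (∑ j, if |θ * q j| ≤ 1 / 16 then (θ * q j) ^ 2 / 8 else 0) =
              θ ^ 2 / 8 * (∑ j, if |θ * q j| ≤ 1 / 16 then q j ^ 2 else 0) := by
            rw [Finset.mul_sum]; refine Finset.sum_congr rfl fun j _ => ?_
            split_ifs <;> ring
          rw [this]
          calc _ = θ ^ 2 / 8 * (V / 2) := by ring
            _ ≤ _ := by gcongr
      _ ≤ _ := by
          rw [Real.exp_sum]
          refine Finset.prod_le_prod (fun j _ => (Real.exp_pos _).le) fun j _ => ?_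
          split_ifs with hj
          · exact (h.sg j).mgf_ge (h.mean j) (h.var j) hj
          · rw [Real.exp_zero]; exact (h.sg j).mgf_ge_one (h.mean j) _
  have hS1 : S ≤ Real.exp (2 * θ ^ 2 * V) := by
    refine (hSG.subg (2 * θ)).trans (le_of_eq ?_)
    congr 1; rw [← hVd]; ring
  have hSpos : 0 < S := by
    rw [hS]; exact integral_exp_pos (hSG.int (2 * θ))
  have hFpos : 0 < F := (Real.exp_pos _).trans_le hF1
  have hF2 : 2 * Real.exp (2 * θ) ≤ F := by
    refine le_trans ?_ hF1
    have h1 : 2 * θ + 1 ≤ θ ^ 2 * V / 16 := by nlinarith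
    calc 2 * Real.exp (2 * θ) ≤ Real.exp 1 * Real.exp (2 * θ) := by
          gcongr; have := Real.add_one_le_exp (1 : ℝ); linarith
      _ = Real.exp (2 * θ + 1) := by rw [← Real.exp_add, add_comm]
      _ ≤ _ := Real.exp_le_exp.2 h1
  set P := μ.real {ω | 2 ≤ Y ω} with hP
  set c := 2 * S / F with hc
  have hcpos : 0 < c := by positivity
  have hub : F ≤ Real.exp (2 * θ) + S / (2 * c) + c / 2 * P := by
    have hI : Integrable (Set.indicator {ω | 2 ≤ Y ω} (fun _ => (1 : ℝ))) μ :=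
      (integrable_const (1 : ℝ)).indicator hAm
    have hg1 : Integrable (fun ω => Real.exp (2 * θ) + (1 / (2 * c)) * Real.exp (2 * θ * Y ω)) μ :=
      (integrable_const _).add ((hSG.int (2 * θ)).const_mul _)
    have hg : Integrable (fun ω => Real.exp (2 * θ) + (1 / (2 * c)) * Real.exp (2 * θ * Y ω) +
        c / 2 * Set.indicator {ω | 2 ≤ Y ω} (fun _ => (1 : ℝ)) ω) μ := hg1.add (hI.const_mul _)
    have := integral_mono (hSG.int θ) hg (fun ω => by
      simp only
      change Real.exp (θ * Y ω) ≤ _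
      have hsq : Real.exp (2 * θ * Y ω) = Real.exp (θ * Y ω) ^ 2 := by
        rw [← Real.exp_nat_mul]; congr 1; push_cast; ring
      by_cases hy : 2 ≤ Y ω
      · have : Set.indicator {ω | 2 ≤ Y ω} (fun _ => (1 : ℝ)) ω = 1 :=
          Set.indicator_of_mem (s := {ω | 2 ≤ Y ω}) hy _
        rw [this, hsq]
        have : Real.exp (θ * Y ω) ≤ 1 / (2 * c) * Real.exp (θ * Y ω) ^ 2 + c / 2 * 1 := by
          rw [← sub_nonneg]
          have : 1 / (2 * c) * Real.exp (θ * Y ω) ^ 2 + c / 2 * 1 - Real.exp (θ * Y ω) =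
            (Real.exp (θ * Y ω) - c) ^ 2 / (2 * c) := by field_simp; ring
          rw [this]; positivity
        linarith [Real.exp_pos (2 * θ)]
      · have : Set.indicator {ω | 2 ≤ Y ω} (fun _ => (1 : ℝ)) ω = 0 :=
          Set.indicator_of_notMem (s := {ω | 2 ≤ Y ω}) hy _
        rw [this]
        have h1 : Real.exp (θ * Y ω) ≤ Real.exp (2 * θ) := Real.exp_le_exp.2 (by nlinarith)
        have h2 : 0 < 1 / (2 * c) * Real.exp (2 * θ * Y ω) := by positivity
        linarith)
    rw [integral_add hg1 (hI.const_mul _), integral_add (integrable_const _) ((hSG.int (2 * θ)).const_mul _),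
      integral_const_mul, integral_const_mul, integral_indicator_const _ hAm] at this
    simp only [integral_const, probReal_univ, smul_eq_mul, one_mul, mul_one] at this
    refine this.trans (le_of_eq ?_)
    rw [hS, hP]; ring
  have e1 : S / (2 * c) = F / 4 := by rw [hc]; field_simp; norm_num
  rw [e1] at hub
  have h5 : F / 4 ≤ S / F * P := by
    have : c / 2 = S / F := by rw [hc]; field_simp
    rw [this] at hub; linarith
  have h6 : F ^ 2 / 4 ≤ S * P := by
    have h7 : F * (F / 4) ≤ F * (S / F * P) := by gcongr
    have h8 : F * (S / F * P) = S * P := by field_simp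
    nlinarith
  have hF3 : 1 ≤ F := by
    refine le_trans ?_ hF1
    rw [Real.one_le_exp_iff]
    have : 0 ≤ V := Finset.sum_nonneg fun j _ => sq_nonneg _
    positivity
  have hP0 : 0 ≤ P := measureReal_nonneg
  have h9 : 1 / 4 ≤ Real.exp (2 * θ ^ 2 * V) * P := by
    calc 1 / 4 ≤ F ^ 2 / 4 := by nlinarith
      _ ≤ S * P := h6
      _ ≤ _ := by gcongr
  rw [Real.exp_neg]
  have := Real.exp_pos (2 * θ ^ 2 * V)
  rw [← div_eq_mul_inv, div_le_iff₀ this]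
  linarith

open Classical in
lemma count_tail [IsProbabilityMeasure μ] {A : Type*} [Fintype A] {Y : A → Ω → ℝ} (hi : iIndepFun Y μ)
    (hm : ∀ i, Measurable (Y i)) {p : ℝ} (hp : ∀ i, p ≤ μ.real {ω | 2 ≤ Y i ω}) :
    μ.real {ω | ((Finset.univ.filter fun i => 2 ≤ Y i ω).card : ℝ) ≤ p * Fintype.card A / 4} ≤
      Real.exp (-(p * Fintype.card A / 4)) := by
  set B : A → Ω → ℝ := fun i ω => if 2 ≤ Y i ω then 1 else 0 with hB
  have hind : iIndepFun B μ := hi.comp (fun i x => if 2 ≤ x then 1 else 0)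
    (fun i => Measurable.ite measurableSet_Ici measurable_const measurable_const)
  have hBm : ∀ i, Measurable (B i) := fun i =>
    Measurable.ite (measurableSet_le measurable_const (hm i)) measurable_const measurable_const
  have hAm : ∀ i, MeasurableSet {ω | 2 ≤ Y i ω} := fun i => measurableSet_le measurable_const (hm i)
  have hbd : ∀ i ω, Real.exp (-1 * B i ω) = 1 - (1 - Real.exp (-1)) * Set.indicator {ω | 2 ≤ Y i ω} (fun _ => (1 : ℝ)) ω := by
    intro i ω
    simp only [hB, Set.indicator_apply, Set.mem_ofPred_eq]
    split_ifs <;> simp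
  have hI : ∀ i, Integrable (Set.indicator {ω | 2 ≤ Y i ω} (fun _ => (1 : ℝ))) μ := fun i =>
      (integrable_const (1 : ℝ)).indicator (hAm i)
  have hintg : ∀ i, Integrable (fun ω => Real.exp (-1 * B i ω)) μ := fun i => by
    simp_rw [hbd]; exact (integrable_const _).sub ((hI i).const_mul _)
  have hmg : ∀ i, mgf (B i) μ (-1) ≤ Real.exp (-(p / 2)) := fun i => by
    simp only [mgf]; simp_rw [hbd]
    rw [integral_sub (integrable_const _) ((hI i).const_mul _), integral_const_mul,
      integral_indicator_const _ (hAm i)]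
    simp only [integral_const, probReal_univ, smul_eq_mul, mul_one]
    have h1 := Real.add_one_le_exp (-(p / 2))
    have h2 : Real.exp (-1) ≤ 1 / 2 := by
      rw [Real.exp_neg, ← one_div]
      apply one_div_le_one_div_of_le (by norm_num)
      have := Real.add_one_le_exp (1 : ℝ); linarith
    have h3 := hp i
    have h4 : 0 ≤ μ.real {ω | 2 ≤ Y i ω} := measureReal_nonneg
    nlinarith
  have hch := measure_le_le_exp_mul_mgf (μ := μ) (X := ∑ i, B i) (p * Fintype.card A / 4) (t := -1)
    (by norm_num) (hind.integrable_exp_mul_sum (t := -1) (s := Finset.univ) hBm (fun i _ => hintg i))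
  rw [hind.mgf_sum hBm] at hch
  have e1 : ∀ ω, ((Finset.univ.filter fun i => 2 ≤ Y i ω).card : ℝ) = (∑ i, B i) ω := fun ω => by
    simp [hB, Finset.sum_apply]
  simp_rw [e1]
  refine hch.trans ?_
  have h2 : ∏ i, mgf (B i) μ (-1) ≤ ∏ i : A, Real.exp (-(p / 2)) :=
    Finset.prod_le_prod (fun i _ => mgf_nonneg) fun i _ => hmg i
  rw [Finset.prod_const, Finset.card_univ, ← Real.exp_nat_mul] at h2
  calc _ ≤ Real.exp (-(-1) * (p * Fintype.card A / 4)) * Real.exp (Fintype.card A * -(p / 2)) := by gcongr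
    _ = _ := by rw [← Real.exp_add]; congr 1; ring

lemma sumsq_tail [IsProbabilityMeasure μ] {A : Type*} [Fintype A] [Fintype κ] {Z : A × κ → Ω → ℝ}
    (h : StdFam μ Z) (J : Finset A) {m : ℕ} (hJ : J.card ≤ m) (q : κ → ℝ) {K : ℝ} (hK : 0 < K)
    (hq : ∑ j, q j ^ 2 ≤ K) :
    μ.real {ω | 16 * K * m < ∑ i ∈ J, (∑ j, q j * Z (i, j) ω) ^ 2} ≤ 2 ^ m * Real.exp (-(4 * m)) := by
  set r := Real.sqrt K with hr
  have hr0 : 0 < r := Real.sqrt_pos.2 hK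
  have hr2 : r ^ 2 = K := Real.sq_sqrt hK.le
  set Y : A → Ω → ℝ := fun i ω => (∑ j, (q j / r) * Z (i, j) ω) ^ 2 / 4 with hY
  have hZm := h.meas
  have hind : iIndepFun Y μ :=
    (rows_indep h).comp (fun i (v : κ → ℝ) => (∑ j, (q j / r) * v j) ^ 2 / 4) (fun i => by fun_prop)
  have hYm : ∀ i, Measurable (Y i) := fun i => by simp only [hY]; fun_prop
  have hSG : ∀ i, SG μ (fun ω => ∑ j, (q j / r) * Z (i, j) ω) (∑ j, (q j / r) ^ 2) := fun i =>
    (h.precomp (g := fun j => (i, j)) (fun a b hab => by simpa using hab)).lincomb (fun j => q j / r)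
  have hs1 : ∑ j, (q j / r) ^ 2 ≤ 1 := by
    simp_rw [div_pow]; rw [← Finset.sum_div, hr2, div_le_one hK]; exact hq
  have hintg : ∀ i, Integrable (fun ω => Real.exp (1 * Y i ω)) μ := fun i => by
    simp_rw [one_mul]; exact (hSG i).int_exp_sq hs1
  have hmg : ∀ i, mgf (Y i) μ 1 ≤ 2 := fun i => by
    simp only [mgf]; simp_rw [one_mul]; exact (hSG i).exp_sq hs1
  have hch := measure_ge_le_exp_mul_mgf (μ := μ) (X := ∑ i ∈ J, Y i) (4 * m : ℝ) (t := 1)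
    (by norm_num) (hind.integrable_exp_mul_sum (t := 1) (s := J) hYm (fun i _ => hintg i))
  rw [hind.mgf_sum hYm] at hch
  have h2 : ∏ i ∈ J, mgf (Y i) μ 1 ≤ 2 ^ m := by
    calc _ ≤ ∏ i ∈ J, (2 : ℝ) := Finset.prod_le_prod (fun i _ => mgf_nonneg) fun i _ => hmg i
      _ = 2 ^ J.card := by simp
      _ ≤ _ := pow_le_pow_right₀ (by norm_num) hJ
  refine (measureReal_mono (fun ω hω => ?_)).trans (hch.trans ?_)
  · simp only [Set.mem_ofPred_eq, Finset.sum_apply] at hω ⊢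
    have e1 : ∀ i, ∑ j, q j * Z (i, j) ω = r * ∑ j, (q j / r) * Z (i, j) ω := fun i => by
      rw [Finset.mul_sum]; refine Finset.sum_congr rfl fun j _ => ?_; field_simp
    have e2 : ∑ i ∈ J, (∑ j, q j * Z (i, j) ω) ^ 2 = 4 * K * ∑ i ∈ J, Y i ω := by
      rw [Finset.mul_sum]; refine Finset.sum_congr rfl fun i _ => ?_
      rw [e1, mul_pow, hr2]; simp only [hY]; ring
    rw [e2] at hω
    have : 4 * K * (4 * m) < 4 * K * ∑ i ∈ J, Y i ω := by linarith
    exact (lt_of_mul_lt_mul_left this (by positivity)).le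
  · calc _ ≤ Real.exp (-1 * (4 * m)) * 2 ^ m := by gcongr
      _ = _ := by rw [mul_comm]; congr 2; ring

lemma SG.tail [IsProbabilityMeasure μ] {Y : Ω → ℝ} {s N t : ℝ} (h : SG μ Y s) (hs : s ≤ N) (hN : 0 < N)
    (ht : 0 ≤ t) : μ.real {ω | t ≤ |Y ω|} ≤ 2 * Real.exp (-(t ^ 2 / (2 * N))) := by
  have h1 := measure_ge_le_exp_mul_mgf (μ := μ) (X := Y) t (t := t / N) (by positivity) (h.int _)
  have h2 := measure_le_le_exp_mul_mgf (μ := μ) (X := Y) (-t) (t := -(t / N))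
    (by have : 0 ≤ t / N := by positivity
        linarith) (h.int _)
  have h3 : ∀ σ : ℝ, σ ^ 2 = 1 → mgf Y μ (σ * (t / N)) ≤ Real.exp (t ^ 2 / (2 * N)) := fun σ hσ => by
    refine (h.subg _).trans (Real.exp_le_exp.2 ?_)
    rw [mul_pow, hσ]
    calc 1 * (t / N) ^ 2 * s / 2 ≤ 1 * (t / N) ^ 2 * N / 2 := by gcongr
      _ = _ := by field_simp
  have e : ∀ a : ℝ, a = -(t ^ 2 / N) → Real.exp a * Real.exp (t ^ 2 / (2 * N)) = Real.exp (-(t ^ 2 / (2 * N))) := by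
    rintro a rfl
    rw [← Real.exp_add]; congr 1; field_simp; ring
  have h1' : μ.real {ω | t ≤ Y ω} ≤ Real.exp (-(t ^ 2 / (2 * N))) := by
    refine h1.trans ?_
    rw [← e (-(t / N) * t) (by ring)]
    gcongr
    simpa using h3 1 (by norm_num)
  have h2' : μ.real {ω | Y ω ≤ -t} ≤ Real.exp (-(t ^ 2 / (2 * N))) := by
    refine h2.trans ?_
    rw [← e (-(-(t / N)) * -t) (by ring)]
    gcongr
    simpa using h3 (-1) (by norm_num)
  refine (measureReal_mono (s₂ := {ω | t ≤ Y ω} ∪ {ω | Y ω ≤ -t}) ?_).trans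
    ((measureReal_union_le _ _).trans (by linarith))
  intro ω hω
  simp only [Set.mem_ofPred_eq, Set.mem_union] at hω ⊢
  rcases abs_cases (Y ω) with h | h
  · left; linarith
  · right; linarith

lemma freeze [IsProbabilityMeasure μ] {E F : Type*} [MeasurableSpace E] [MeasurableSpace F] {X : Ω → E} {Y : Ω → F}
    (hX : Measurable X) (hY : Measurable Y) (hi : IndepFun X Y μ) {s : Set (E × F)} (hs : MeasurableSet s)
    {ε : ℝ} (hε : ∀ x, μ.real {ω | (x, Y ω) ∈ s} ≤ ε) : μ.real {ω | (X ω, Y ω) ∈ s} ≤ ε := by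
  have h0 : ∀ x, 0 ≤ ε := fun x => (measureReal_nonneg).trans (hε x)
  have hmap := (indepFun_iff_map_prod_eq_prod_map_map hX.aemeasurable hY.aemeasurable).1 hi
  have := Measure.isProbabilityMeasure_map (μ := μ) hX.aemeasurable
  have := Measure.isProbabilityMeasure_map (μ := μ) hY.aemeasurable
  have h1 : μ {ω | (X ω, Y ω) ∈ s} = μ.map (fun ω => (X ω, Y ω)) s :=
    (Measure.map_apply (hX.prodMk hY) hs).symm
  have hne : Nonempty Ω := μ.nonempty_of_neZero
  obtain ⟨ω0⟩ := hne
  have hε0 := h0 (X ω0)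
  have h2 : μ {ω | (X ω, Y ω) ∈ s} ≤ ENNReal.ofReal ε := by
    rw [h1, hmap, Measure.prod_apply hs]
    calc _ ≤ ∫⁻ x, ENNReal.ofReal ε ∂(μ.map X) := lintegral_mono fun x => by
          rw [Measure.map_apply hY (measurable_prodMk_left hs)]
          rw [← ENNReal.ofReal_toReal (measure_ne_top μ _)]
          exact ENNReal.ofReal_le_ofReal (hε x)
      _ = _ := by simp
  exact ENNReal.toReal_le_of_le_ofReal hε0 h2

open Classical in
lemma freeze_rows [Fintype ι] [Fintype κ] {Z : ι × κ → Ω → ℝ} (h : StdFam μ Z) {E : Type*} [MeasurableSpace E]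
    (R : Finset ι)
    (Φ : (ι → κ → ℝ) → E) (hΦ : Measurable Φ)
    (hdep : ∀ z z', (∀ i ∈ R, z i = z' i) → Φ z = Φ z') (s : Set (E × (ι → κ → ℝ)))
    (hs : MeasurableSet s) (hsdep : ∀ q z z', (∀ i ∉ R, z i = z' i) → (q, z) ∈ s → (q, z') ∈ s)
    {ε : ℝ} (hε : ∀ q, μ.real {ω | (q, fun i j => Z (i, j) ω) ∈ s} ≤ ε) :
    μ.real {ω | (Φ (fun i j => Z (i, j) ω), fun i j => Z (i, j) ω) ∈ s} ≤ ε := by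
  have := h.indep.isProbabilityMeasure
  have hZm := h.meas
  have h1 := (rows_indep h).indepFun_finset R Rᶜ disjoint_compl_right (fun i => by fun_prop)
  let e1 : (R → κ → ℝ) → (ι → κ → ℝ) := fun v i j => if hi : i ∈ R then v ⟨i, hi⟩ j else 0
  let e2 : ((Rᶜ : Finset ι) → κ → ℝ) → (ι → κ → ℝ) := fun v i j =>
    if hi : i ∈ (Rᶜ : Finset ι) then v ⟨i, hi⟩ j else 0
  have m1 : Measurable e1 := by
    refine measurable_pi_lambda _ fun i => measurable_pi_lambda _ fun j => ?_
    by_cases hi : i ∈ R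
    · simp only [e1, hi, dif_pos]; fun_prop
    · simp only [e1, hi, dite_false]; fun_prop
  have m2 : Measurable e2 := by
    refine measurable_pi_lambda _ fun i => measurable_pi_lambda _ fun j => ?_
    by_cases hi : i ∈ (Rᶜ : Finset ι)
    · simp only [e2, hi, dif_pos]; fun_prop
    · simp only [e2, hi, dite_false]; fun_prop
  have h2 := h1.comp (hΦ.comp m1) m2
  have hz : Measurable (fun ω (i : ι) (j : κ) => Z (i, j) ω) := by fun_prop
  have k1 : ∀ ω, Φ (e1 (fun (i : R) j => Z (i, j) ω)) = Φ (fun i j => Z (i, j) ω) := fun ω =>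
    hdep _ _ fun i hi => by ext j; simp [e1, hi]
  have k2 : ∀ q ω, (q, e2 (fun (i : (Rᶜ : Finset ι)) j => Z (i, j) ω)) ∈ s ↔ (q, fun i j => Z (i, j) ω) ∈ s :=
    fun q ω => ⟨hsdep _ _ _ fun i hi => by ext j; simp [e2, hi], hsdep _ _ _ fun i hi => by ext j; simp [e2, hi]⟩
  have hr1 : Measurable (fun ω (i : R) (j : κ) => Z (i.1, j) ω) := by fun_prop
  have hr2 : Measurable (fun ω (i : (Rᶜ : Finset ι)) (j : κ) => Z (i.1, j) ω) := by fun_prop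
  have h3 := freeze (μ := μ) (X := fun ω => Φ (e1 (fun (i : R) j => Z (i, j) ω)))
    (Y := fun ω => e2 (fun (i : (Rᶜ : Finset ι)) j => Z (i, j) ω)) (hΦ.comp (m1.comp hr1))
    (m2.comp hr2) h2 hs (ε := ε) (fun q => by simp_rw [k2]; exact hε q)
  simp_rw [k2, k1] at h3
  exact h3

end anti
end SVPproof

namespace SVPproof

section det
variable {T A κ : Type*} [Fintype T] [Fintype A] [Fintype κ] [DecidableEq T] [DecidableEq A] [DecidableEq κ]

def UTm (lam : κ → ℝ) (z : T ⊕ A → κ → ℝ) : Matrix T κ ℝ :=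
  Matrix.of fun k j => Real.sqrt (lam j) * z (Sum.inl k) j
def UAm (lam : κ → ℝ) (z : T ⊕ A → κ → ℝ) : Matrix A κ ℝ :=
  Matrix.of fun k j => Real.sqrt (lam j) * z (Sum.inr k) j
def Hm (lam : κ → ℝ) (z : T ⊕ A → κ → ℝ) : Matrix T T ℝ := (UTm lam z * (UTm lam z)ᵀ)⁻¹
def Pm (lam : κ → ℝ) (z : T ⊕ A → κ → ℝ) : Matrix κ κ ℝ :=
  1 - (UTm lam z)ᵀ * Hm lam z * UTm lam z
def qT (lam : κ → ℝ) (z : T ⊕ A → κ → ℝ) : κ → ℝ := fun j =>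
  Real.sqrt (lam j) * ((UTm lam z)ᵀ *ᵥ (Hm lam z *ᵥ fun _ => 1)) j
def qI (lam : κ → ℝ) (I : Finset A) (z : T ⊕ A → κ → ℝ) : κ → ℝ := fun j =>
  Real.sqrt (lam j) * (Pm lam z *ᵥ ((UAm lam z)ᵀ *ᵥ fun i => if i ∈ I then 1 else 0)) j

lemma wsum (lam : κ → ℝ) (z : T ⊕ A → κ → ℝ) (xT : T → ℝ) (xA : A → ℝ) (j : κ) :
    ((UTm lam z)ᵀ *ᵥ xT + (UAm lam z)ᵀ *ᵥ xA) j =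
      Real.sqrt (lam j) * ∑ k, Sum.elim xT xA k * z k j := by
  simp only [UTm, UAm, mulVec, dotProduct, Pi.add_apply, transpose_apply, of_apply,
    Fintype.sum_sum_type, Sum.elim_inl, Sum.elim_inr, mul_add, Finset.mul_sum]
  congr 1 <;> exact Finset.sum_congr rfl fun k _ => by ring

lemma wquad {lam : κ → ℝ} (hl : ∀ j, 0 < lam j) (z : T ⊕ A → κ → ℝ) (xT yT : T → ℝ) (xA yA : A → ℝ) :
    ((UTm lam z)ᵀ *ᵥ xT + (UAm lam z)ᵀ *ᵥ xA) ⬝ᵥ ((UTm lam z)ᵀ *ᵥ yT + (UAm lam z)ᵀ *ᵥ yA) =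
      Bil z lam (Sum.elim xT xA) (Sum.elim yT yA) +
        (∑ j, lam j) * (xT ⬝ᵥ yT + xA ⬝ᵥ yA) := by
  have e : ∑ k, Sum.elim xT xA k * Sum.elim yT yA k = xT ⬝ᵥ yT + xA ⬝ᵥ yA := by
    simp [Fintype.sum_sum_type, dotProduct]
  unfold Bil
  rw [e, sub_add_cancel]
  unfold dotProduct
  refine Finset.sum_congr rfl fun j _ => ?_
  rw [wsum, wsum]
  have := Real.mul_self_sqrt (hl j).le
  linear_combination ((∑ k, Sum.elim xT xA k * z k j) * (∑ k, Sum.elim yT yA k * z k j)) * this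

lemma elim_sq (xT : T → ℝ) (xA : A → ℝ) :
    ∑ k, (Sum.elim xT xA k) ^ 2 = xT ⬝ᵥ xT + xA ⬝ᵥ xA := by
  simp [Fintype.sum_sum_type, dotProduct, sq]

lemma wquad_bd {lam : κ → ℝ} (hl : ∀ j, 0 < lam j) {z : T ⊕ A → κ → ℝ} (h : OpEv z lam (1 / 100))
    (xT : T → ℝ) (xA : A → ℝ) :
    99 / 100 * (∑ j, lam j) * (xT ⬝ᵥ xT + xA ⬝ᵥ xA) ≤
      ((UTm lam z)ᵀ *ᵥ xT + (UAm lam z)ᵀ *ᵥ xA) ⬝ᵥ ((UTm lam z)ᵀ *ᵥ xT + (UAm lam z)ᵀ *ᵥ xA) ∧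
    ((UTm lam z)ᵀ *ᵥ xT + (UAm lam z)ᵀ *ᵥ xA) ⬝ᵥ ((UTm lam z)ᵀ *ᵥ xT + (UAm lam z)ᵀ *ᵥ xA) ≤
      101 / 100 * (∑ j, lam j) * (xT ⬝ᵥ xT + xA ⬝ᵥ xA) := by
  have h1 := h (Sum.elim xT xA) (Sum.elim xT xA)
  have h0 : 0 ≤ ∑ k, (Sum.elim xT xA k) ^ 2 := Finset.sum_nonneg fun _ _ => sq_nonneg _
  rw [mul_assoc, Real.mul_self_sqrt h0, elim_sq] at h1
  rw [wquad hl]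
  have := abs_le.1 h1
  constructor <;> linarith [this.1, this.2]

lemma HG {lam : κ → ℝ} (hl : ∀ j, 0 < lam j) (hL : 0 < ∑ j, lam j) {z : T ⊕ A → κ → ℝ}
    (h : OpEv z lam (1 / 100)) :
    Hm lam z * (UTm lam z * (UTm lam z)ᵀ) = 1 ∧ (UTm lam z * (UTm lam z)ᵀ) * Hm lam z = 1 := by
  have hu : IsUnit (UTm lam z * (UTm lam z)ᵀ) := by
    rw [← Matrix.mulVec_injective_iff_isUnit]
    rw [← Matrix.coe_mulVecLin, ← LinearMap.ker_eq_bot, LinearMap.ker_eq_bot']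
    intro x hx
    simp only [Matrix.mulVecLin_apply] at hx
    have h1 := (wquad_bd hl h x (0 : A → ℝ)).1
    simp only [mulVec_zero, add_zero, dotProduct_zero] at h1
    have h2 : ((UTm lam z)ᵀ *ᵥ x) ⬝ᵥ ((UTm lam z)ᵀ *ᵥ x) = x ⬝ᵥ ((UTm lam z * (UTm lam z)ᵀ) *ᵥ x) := by
      rw [← mulVec_mulVec, dotProduct_mulVec x, ← mulVec_transpose]
    rw [h2, hx, dotProduct_zero] at h1
    have h3 : 0 ≤ x ⬝ᵥ x := by
      unfold dotProduct; exact Finset.sum_nonneg fun i _ => mul_self_nonneg _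
    have h4 : x ⬝ᵥ x = 0 := by
      apply le_antisymm _ h3
      by_contra hc; push Not at hc
      have : 0 < 99 / 100 * (∑ j, lam j) * (x ⬝ᵥ x) := by positivity
      linarith
    exact dotProduct_self_eq_zero.1 h4
  have hd := (Matrix.isUnit_iff_isUnit_det _).1 hu
  exact ⟨Matrix.nonsing_inv_mul _ hd, Matrix.mul_nonsing_inv _ hd⟩

lemma UT_P {lam : κ → ℝ} (hl : ∀ j, 0 < lam j) (hL : 0 < ∑ j, lam j) {z : T ⊕ A → κ → ℝ}
    (h : OpEv z lam (1 / 100)) : UTm lam z * Pm lam z = 0 := by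
  unfold Pm
  rw [Matrix.mul_sub, Matrix.mul_one, ← Matrix.mul_assoc, ← Matrix.mul_assoc, (HG hl hL h).2, Matrix.one_mul, sub_self]

lemma P_symm (lam : κ → ℝ) (z : T ⊕ A → κ → ℝ) : (Pm lam z)ᵀ = Pm lam z := by
  unfold Pm Hm
  rw [transpose_sub, transpose_one, transpose_mul, transpose_mul, transpose_transpose,
    transpose_nonsing_inv, transpose_mul, transpose_transpose, Matrix.mul_assoc]

lemma P_idem {lam : κ → ℝ} (hl : ∀ j, 0 < lam j) (hL : 0 < ∑ j, lam j) {z : T ⊕ A → κ → ℝ}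
    (h : OpEv z lam (1 / 100)) : Pm lam z * Pm lam z = Pm lam z := by
  conv_lhs => enter [1]; unfold Pm
  rw [Matrix.sub_mul, Matrix.one_mul, Matrix.mul_assoc, UT_P hl hL h, Matrix.mul_zero, sub_zero]

lemma P_dot {lam : κ → ℝ} (hl : ∀ j, 0 < lam j) (hL : 0 < ∑ j, lam j) {z : T ⊕ A → κ → ℝ}
    (h : OpEv z lam (1 / 100)) (v w : κ → ℝ) :
    v ⬝ᵥ (Pm lam z *ᵥ w) = (Pm lam z *ᵥ v) ⬝ᵥ (Pm lam z *ᵥ w) := by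
  rw [dotProduct_mulVec (Pm lam z *ᵥ v), ← mulVec_transpose, P_symm, mulVec_mulVec, P_idem hl hL h,
    dotProduct_mulVec, ← mulVec_transpose, P_symm]

lemma P_norm {lam : κ → ℝ} (hl : ∀ j, 0 < lam j) (hL : 0 < ∑ j, lam j) {z : T ⊕ A → κ → ℝ}
    (h : OpEv z lam (1 / 100)) (v : κ → ℝ) : (Pm lam z *ᵥ v) ⬝ᵥ (Pm lam z *ᵥ v) ≤ v ⬝ᵥ v := by
  have h1 := P_dot hl hL h v v
  have h2 : 0 ≤ (v - Pm lam z *ᵥ v) ⬝ᵥ (v - Pm lam z *ᵥ v) := by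
    unfold dotProduct; exact Finset.sum_nonneg fun i _ => mul_self_nonneg _
  rw [sub_dotProduct, dotProduct_sub, dotProduct_sub, dotProduct_comm (Pm lam z *ᵥ v) v] at h2
  linarith

/-- block elimination -/
lemma block_elim {lam : κ → ℝ} (hl : ∀ j, 0 < lam j) (hL : 0 < ∑ j, lam j) {z : T ⊕ A → κ → ℝ}
    (h : OpEv z lam (1 / 100)) {bT : T → ℝ} {bA : A → ℝ}
    (hT : UTm lam z *ᵥ ((UTm lam z)ᵀ *ᵥ bT + (UAm lam z)ᵀ *ᵥ bA) = fun _ => 1)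
    (hA : UAm lam z *ᵥ ((UTm lam z)ᵀ *ᵥ bT + (UAm lam z)ᵀ *ᵥ bA) = fun _ => 1) (i : A) :
    (UAm lam z *ᵥ (Pm lam z *ᵥ ((UAm lam z)ᵀ *ᵥ bA))) i = 1 - ∑ j, qT lam z j * z (Sum.inr i) j := by
  set g := (UAm lam z)ᵀ *ᵥ bA with hg
  have h1 : bT = Hm lam z *ᵥ (fun _ => 1) - Hm lam z *ᵥ (UTm lam z *ᵥ g) := by
    rw [← hT, mulVec_add, mulVec_add, add_sub_cancel_right, mulVec_mulVec _ (UTm lam z), mulVec_mulVec, (HG hl hL h).1,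
      one_mulVec]
  have h2 : (UTm lam z)ᵀ *ᵥ bT + g = (UTm lam z)ᵀ *ᵥ (Hm lam z *ᵥ fun _ => 1) + Pm lam z *ᵥ g := by
    rw [h1, Pm, mulVec_sub, sub_mulVec, one_mulVec, mulVec_mulVec, mulVec_mulVec, mulVec_mulVec]
    abel
  rw [h2, mulVec_add] at hA
  have h3 := congrFun hA i
  simp only [Pi.add_apply] at h3
  have h4 : (UAm lam z *ᵥ ((UTm lam z)ᵀ *ᵥ (Hm lam z *ᵥ fun _ => 1))) i = ∑ j, qT lam z j * z (Sum.inr i) j := by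
    simp only [qT]
    generalize (UTm lam z)ᵀ *ᵥ (Hm lam z *ᵥ fun _ => 1) = w
    simp only [mulVec, dotProduct, UAm, of_apply]
    exact Finset.sum_congr rfl fun j _ => by ring
  linarith

lemma P_lower {lam : κ → ℝ} (hl : ∀ j, 0 < lam j) (hL : 0 < ∑ j, lam j) {z : T ⊕ A → κ → ℝ}
    (h : OpEv z lam (1 / 100)) (bA : A → ℝ) :
    (∑ j, lam j) / 2 * (bA ⬝ᵥ bA) ≤
      (Pm lam z *ᵥ ((UAm lam z)ᵀ *ᵥ bA)) ⬝ᵥ (Pm lam z *ᵥ ((UAm lam z)ᵀ *ᵥ bA)) := by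
  set g := (UAm lam z)ᵀ *ᵥ bA with hg
  have e : Pm lam z *ᵥ g = (UTm lam z)ᵀ *ᵥ (-(Hm lam z *ᵥ (UTm lam z *ᵥ g))) + (UAm lam z)ᵀ *ᵥ bA := by
    rw [← hg]; clear_value g
    rw [Pm, sub_mulVec, one_mulVec, mulVec_neg, mulVec_mulVec, mulVec_mulVec]
    abel
  have h1 := (wquad_bd hl h (-(Hm lam z *ᵥ (UTm lam z *ᵥ g))) bA).1
  rw [← e] at h1
  have hx : 0 ≤ (-(Hm lam z *ᵥ (UTm lam z *ᵥ g))) ⬝ᵥ (-(Hm lam z *ᵥ (UTm lam z *ᵥ g))) := by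
    unfold dotProduct; exact Finset.sum_nonneg fun i _ => mul_self_nonneg _
  have hb : 0 ≤ bA ⬝ᵥ bA := by
    unfold dotProduct; exact Finset.sum_nonneg fun i _ => mul_self_nonneg _
  nlinarith [mul_nonneg hL.le hx, mul_nonneg hL.le hb]

lemma qI_norm {lam : κ → ℝ} (hl : ∀ j, 0 < lam j) (hL : 0 < ∑ j, lam j) {z : T ⊕ A → κ → ℝ}
    (h : OpEv z lam (1 / 100)) {M : ℝ} (hM : ∀ j, lam j ≤ M) (hM0 : 0 < M) (I : Finset A) :
    ∑ j, qI lam I z j ^ 2 ≤ 2 * M * (∑ j, lam j) * (I.card + 1) := by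
  set e : A → ℝ := fun i => if i ∈ I then 1 else 0 with he
  have h1 := (wquad_bd hl h (0 : T → ℝ) e).2
  have h2 := P_norm hl hL h ((UAm lam z)ᵀ *ᵥ e)
  simp only [mulVec_zero, zero_add, dotProduct_zero] at h1
  have h3 : e ⬝ᵥ e = I.card := by simp [he, dotProduct]
  rw [h3] at h1
  have h4 : ∑ j, qI lam I z j ^ 2 ≤ M * ((Pm lam z *ᵥ ((UAm lam z)ᵀ *ᵥ e)) ⬝ᵥ (Pm lam z *ᵥ ((UAm lam z)ᵀ *ᵥ e))) := by
    unfold dotProduct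
    rw [Finset.mul_sum]
    refine Finset.sum_le_sum fun j _ => ?_
    simp only [qI]
    rw [mul_pow, Real.sq_sqrt (hl j).le, sq]
    exact mul_le_mul_of_nonneg_right (hM j) (mul_self_nonneg _)
  have hc : (0 : ℝ) ≤ I.card := Nat.cast_nonneg _
  calc _ ≤ M * (101 / 100 * (∑ j, lam j) * I.card) := h4.trans (by gcongr; exact h2.trans h1)
    _ ≤ _ := by nlinarith [mul_nonneg (mul_nonneg hM0.le hL.le) hc, mul_pos hM0 hL]

lemma card_sep {i l : A} (hil : i ≠ l) :
    4 * (Finset.univ.filter fun τ : Finset A => i ∈ τ ∧ l ∉ τ).card = 2 ^ Fintype.card A := by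
  have e : (Finset.univ.filter fun τ : Finset A => i ∈ τ ∧ l ∉ τ) = Finset.Icc {i} {l}ᶜ := by
    ext τ
    simp only [Finset.mem_filter, Finset.mem_univ, true_and, Finset.mem_Icc,
      Finset.singleton_subset_iff, and_congr_right_iff]
    intro _
    constructor
    · intro h x hx; simp only [Finset.mem_compl, Finset.mem_singleton]; rintro rfl; exact h hx
    · intro h hl; have := h hl; simp at this
  have hsub : ({i} : Finset A) ⊆ {l}ᶜ := by simpa using hil.symm
  rw [e, Finset.card_Icc_finset hsub, Finset.card_compl]
  simp only [Finset.card_singleton]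
  have h2 : 2 ≤ Fintype.card A := by
    have := Finset.card_le_univ ({i, l} : Finset A)
    rwa [Finset.card_pair hil] at this
  obtain ⟨k, hk⟩ := Nat.exists_eq_add_of_le h2
  rw [hk]
  have : 2 + k - 1 - 1 = k := by omega
  rw [this, pow_add]; norm_num

lemma decouple (F : A → A → ℝ) (S : Finset A) :
    2 ^ Fintype.card A * ∑ i ∈ S, ∑ l ∈ Finset.univ.erase i, F i l =
      4 * ∑ τ : Finset A, ∑ i ∈ S ∩ τ, ∑ l ∈ τᶜ, F i l := by
  have e : ∀ τ : Finset A, ∑ i ∈ S ∩ τ, ∑ l ∈ τᶜ, F i l =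
      ∑ i ∈ S, ∑ l, if i ∈ τ ∧ l ∉ τ then F i l else 0 := fun τ => by
    rw [← Finset.filter_mem_eq_inter, Finset.sum_filter]
    refine Finset.sum_congr rfl fun i _ => ?_
    split_ifs with hi
    · simp only [hi, true_and]
      rw [← Finset.sum_filter]
      congr 1; ext l; simp
    · simp [hi]
  simp_rw [e]
  rw [Finset.sum_comm, Finset.mul_sum, Finset.mul_sum]
  refine Finset.sum_congr rfl fun i _ => ?_
  rw [Finset.sum_comm, Finset.mul_sum, Finset.mul_sum]
  have : ∑ l, 4 * ∑ τ : Finset A, (if i ∈ τ ∧ l ∉ τ then F i l else 0) =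
      ∑ l ∈ Finset.univ.erase i, 4 * ∑ τ : Finset A, (if i ∈ τ ∧ l ∉ τ then F i l else 0) := by
    symm
    refine Finset.sum_subset (Finset.subset_univ _) fun l _ hl => ?_
    have : l = i := by simpa using hl
    subst this
    simp
  rw [this]
  refine Finset.sum_congr rfl fun l hl => ?_
  rw [← Finset.sum_filter, Finset.sum_const, nsmul_eq_mul, ← mul_assoc]
  congr 1
  have := card_sep (A := A) (i := i) (l := l) (fun h => by simp [h] at hl)
  exact_mod_cast this.symm

/-- the main deterministic bound -/
lemma det_bound {lam : κ → ℝ} (hl : ∀ j, 0 < lam j) (hL : 0 < ∑ j, lam j) {z : T ⊕ A → κ → ℝ}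
    (h : OpEv z lam (1 / 100)) {M : ℝ} (hM : ∀ j, lam j ≤ M) (hM0 : 0 < M)
    {bT : T → ℝ} {bA : A → ℝ} (hbA : ∀ i, 0 ≤ bA i)
    (hT : UTm lam z *ᵥ ((UTm lam z)ᵀ *ᵥ bT + (UAm lam z)ᵀ *ᵥ bA) = fun _ => 1)
    (hA : UAm lam z *ᵥ ((UTm lam z)ᵀ *ᵥ bT + (UAm lam z)ᵀ *ᵥ bA) = fun _ => 1)
    (h5 : ∑ i, (∑ j, qT lam z j * z (Sum.inr i) j) ^ 2 ≤ 16 * ((Fintype.card A : ℕ) : ℝ))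
    (h6 : ∀ τ I : Finset A, I ⊆ τ → ∑ l ∈ τᶜ, (∑ j, qI lam I z j * z (Sum.inr l) j) ^ 2 ≤
      16 * (2 * M * (∑ j, lam j) * (I.card + 1)) * ((Fintype.card A : ℕ) : ℝ))
    (S : Finset A) (hS : ∀ i ∈ S, 2 ≤ ∑ j, qT lam z j * z (Sum.inr i) j) :
    (S.card : ℝ) ^ 2 * (∑ j, lam j) ≤ 69632 * M * (S.card + 1) * ((Fintype.card A : ℕ) : ℝ) ^ 2 := by
  set L := ∑ j, lam j with hLd
  set m : ℝ := ((Fintype.card A : ℕ) : ℝ) with hm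
  set a : A → ℝ := fun i => ∑ j, qT lam z j * z (Sum.inr i) j with ha
  set MM : Matrix A A ℝ := UAm lam z * Pm lam z * (UAm lam z)ᵀ with hMM
  have hMb : ∀ i, (MM *ᵥ bA) i = 1 - a i := fun i => by
    rw [hMM, ← mulVec_mulVec, ← mulVec_mulVec]; exact block_elim hl hL h hT hA i
  have hm0 : 0 ≤ m := Nat.cast_nonneg _
  have hbb0 : 0 ≤ bA ⬝ᵥ bA := by
    unfold dotProduct; exact Finset.sum_nonneg fun i _ => mul_self_nonneg _
  -- norm of bA
  have hf : ∑ i, (1 - a i) ^ 2 ≤ 34 * m := by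
    calc ∑ i, (1 - a i) ^ 2 ≤ ∑ i, (2 + 2 * a i ^ 2) :=
          Finset.sum_le_sum fun i _ => by nlinarith [sq_nonneg (1 + a i)]
      _ = 2 * m + 2 * ∑ i, a i ^ 2 := by
          rw [Finset.sum_add_distrib, ← Finset.mul_sum]; simp [hm]; ring
      _ ≤ _ := by linarith
  have hquad : L / 2 * (bA ⬝ᵥ bA) ≤ ∑ i, bA i * (1 - a i) := by
    have h1 := P_lower hl hL h bA
    rw [← P_dot hl hL h] at h1
    refine h1.trans (le_of_eq ?_)
    have : ((UAm lam z)ᵀ *ᵥ bA) ⬝ᵥ (Pm lam z *ᵥ ((UAm lam z)ᵀ *ᵥ bA)) = bA ⬝ᵥ (MM *ᵥ bA) := by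
      rw [hMM, ← mulVec_mulVec, ← mulVec_mulVec, dotProduct_mulVec bA, ← mulVec_transpose]
    rw [this]
    unfold dotProduct
    exact Finset.sum_congr rfl fun i _ => by rw [hMb]
  have hbn : L ^ 2 * (bA ⬝ᵥ bA) ≤ 136 * m := by
    have hcs := Finset.sum_mul_sq_le_sq_mul_sq Finset.univ bA (fun i => 1 - a i)
    have e : ∑ i, bA i ^ 2 = bA ⬝ᵥ bA := by simp [dotProduct, sq]
    rw [e] at hcs
    rcases hbb0.eq_or_lt with h0 | h0
    · rw [← h0]; simp; exact hm0
    · have h1 : (L / 2 * (bA ⬝ᵥ bA)) ^ 2 ≤ (bA ⬝ᵥ bA) * (34 * m) := by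
        calc _ ≤ (∑ i, bA i * (1 - a i)) ^ 2 := by gcongr
          _ ≤ _ := hcs.trans (by gcongr)
      have h2 : (bA ⬝ᵥ bA) * (L ^ 2 * (bA ⬝ᵥ bA)) ≤ (bA ⬝ᵥ bA) * (136 * m) := by nlinarith
      exact le_of_mul_le_mul_left h2 h0
  -- sum of rows
  have hdiag : ∀ i, 0 ≤ MM i i := fun i => by
    have h1 := P_dot hl hL h (UAm lam z i) (UAm lam z i)
    have h2 : MM i i = (UAm lam z i) ⬝ᵥ (Pm lam z *ᵥ (UAm lam z i)) := by
      rw [hMM, Matrix.mul_assoc]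
      rfl
    rw [h2, h1]
    unfold dotProduct; exact Finset.sum_nonneg fun i _ => mul_self_nonneg _
  set s : ℝ := ((S.card : ℕ) : ℝ) with hs
  have hoff : ∑ i ∈ S, ∑ l ∈ Finset.univ.erase i, MM i l * bA l ≤ -s := by
    have : ∀ i ∈ S, ∑ l ∈ Finset.univ.erase i, MM i l * bA l ≤ -1 := fun i hi => by
      have h1 := hMb i
      have h2 : (MM *ᵥ bA) i = MM i i * bA i + ∑ l ∈ Finset.univ.erase i, MM i l * bA l :=
        (Finset.add_sum_erase Finset.univ (fun l => MM i l * bA l) (Finset.mem_univ i)).symm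
      have h3 := mul_nonneg (hdiag i) (hbA i)
      have h4 := hS i hi
      have h5 : a i = ∑ j, qT lam z j * z (Sum.inr i) j := rfl
      linarith
    calc _ ≤ ∑ i ∈ S, (-1 : ℝ) := Finset.sum_le_sum this
      _ = _ := by simp [hs]
  have hs0 : 0 ≤ s := Nat.cast_nonneg _
  set D := Real.sqrt ((bA ⬝ᵥ bA) * (16 * (2 * M * L * (s + 1)) * m)) with hD
  have hdec := decouple (fun i l => MM i l * bA l) S
  have hτ : ∀ τ : Finset A, -D ≤ ∑ i ∈ S ∩ τ, ∑ l ∈ τᶜ, MM i l * bA l := fun τ => by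
    set I := S ∩ τ with hI
    have hMl : ∀ l, ∑ i ∈ I, MM i l = ∑ j, qI lam I z j * z (Sum.inr l) j := fun l => by
      have hsym : MMᵀ = MM := by
        rw [hMM, transpose_mul, transpose_mul, transpose_transpose, P_symm, Matrix.mul_assoc]
      have h1 : ∑ i ∈ I, MM i l = (MM *ᵥ (fun i => if i ∈ I then 1 else 0)) l := by
        simp only [mulVec, dotProduct, mul_ite, mul_one, mul_zero, Finset.sum_ite_mem, Finset.univ_inter]
        refine Finset.sum_congr rfl fun i _ => ?_
        exact congrFun (congrFun hsym l) i
      rw [h1, hMM, ← mulVec_mulVec, ← mulVec_mulVec]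
      simp only [qI]
      generalize Pm lam z *ᵥ ((UAm lam z)ᵀ *ᵥ fun i => if i ∈ I then 1 else 0) = w
      simp only [mulVec, dotProduct, UAm, of_apply]
      exact Finset.sum_congr rfl fun j _ => by ring
    have h1 : ∑ i ∈ I, ∑ l ∈ τᶜ, MM i l * bA l =
        ∑ l ∈ τᶜ, bA l * (∑ j, qI lam I z j * z (Sum.inr l) j) := by
      rw [Finset.sum_comm]
      refine Finset.sum_congr rfl fun l _ => ?_
      rw [← Finset.sum_mul, hMl, mul_comm]
    rw [h1]
    have hcs := Finset.sum_mul_sq_le_sq_mul_sq τᶜ bA (fun l => ∑ j, qI lam I z j * z (Sum.inr l) j)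
    have h2 := h6 τ I Finset.inter_subset_right
    have h3 : ∑ l ∈ τᶜ, bA l ^ 2 ≤ bA ⬝ᵥ bA := by
      have e : bA ⬝ᵥ bA = ∑ i, bA i ^ 2 := by simp [dotProduct, sq]
      rw [e]
      exact Finset.sum_le_sum_of_subset_of_nonneg (Finset.subset_univ _) fun i _ _ => sq_nonneg _
    have hIc : (I.card : ℝ) ≤ s := by
      rw [hs]; exact_mod_cast Finset.card_le_card Finset.inter_subset_left
    have h4 : (∑ l ∈ τᶜ, bA l * (∑ j, qI lam I z j * z (Sum.inr l) j)) ^ 2 ≤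
        (bA ⬝ᵥ bA) * (16 * (2 * M * L * (s + 1)) * m) := by
      refine hcs.trans ?_
      refine mul_le_mul h3 (h2.trans ?_) (Finset.sum_nonneg fun _ _ => sq_nonneg _) hbb0
      gcongr
    have := Real.abs_le_sqrt h4
    exact (abs_le.1 this).1
  have hcardpow : (0 : ℝ) < 2 ^ Fintype.card A := by positivity
  have hsum : -(2 ^ Fintype.card A * D) ≤ ∑ τ : Finset A, ∑ i ∈ S ∩ τ, ∑ l ∈ τᶜ, MM i l * bA l := by
    calc -(2 ^ Fintype.card A * D) = ∑ τ : Finset A, -D := by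
          simp
      _ ≤ _ := Finset.sum_le_sum fun τ _ => hτ τ
  have hfin : s ≤ 4 * D := by
    have : 2 ^ Fintype.card A * s ≤ 2 ^ Fintype.card A * (4 * D) := by
      have := mul_le_mul_of_nonneg_left hoff hcardpow.le
      linarith
    exact le_of_mul_le_mul_left this hcardpow
  have hD2 : D ^ 2 = (bA ⬝ᵥ bA) * (16 * (2 * M * L * (s + 1)) * m) := Real.sq_sqrt (by positivity)
  have h7 : s ^ 2 ≤ 16 * ((bA ⬝ᵥ bA) * (16 * (2 * M * L * (s + 1)) * m)) := by
    rw [← hD2]; nlinarith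
  have h8 : L * (s ^ 2 * L) ≤ L * (69632 * M * (s + 1) * m ^ 2) := by
    calc L * (s ^ 2 * L) ≤ L * (16 * ((bA ⬝ᵥ bA) * (16 * (2 * M * L * (s + 1)) * m)) * L) := by gcongr
      _ = 512 * M * L * (s + 1) * m * (L ^ 2 * (bA ⬝ᵥ bA)) := by ring
      _ ≤ 512 * M * L * (s + 1) * m * (136 * m) := by gcongr
      _ = _ := by ring
  exact le_of_mul_le_mul_left h8 hL

end det
end SVPproof

namespace SVPproof

section svp

lemma SVP_beta {n d : ℕ} {X : Matrix (Fin n) (Fin d) ℝ} {y : Fin n → ℝ} (h : SVPholds X y)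
    (U : Matrix (Fin n) (Fin d) ℝ) (hU : ∀ i j, U i j = y i * X i j)
    (hinj : ∀ x : Fin n → ℝ, Uᵀ *ᵥ x = 0 → x = 0) :
    ∃ β : Fin n → ℝ, (∀ i, 0 ≤ β i) ∧ U *ᵥ (Uᵀ *ᵥ β) = fun _ => 1 := by
  have hyU : ∀ i w, y i * (X i ⬝ᵥ w) = (U *ᵥ w) i := fun i w => by
    simp only [mulVec, dotProduct, Finset.mul_sum]
    exact Finset.sum_congr rfl fun j _ => by rw [hU]; ring
  set G := U * Uᵀ with hG
  have hu : IsUnit G := by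
    rw [← Matrix.mulVec_injective_iff_isUnit]
    rw [← Matrix.coe_mulVecLin, ← LinearMap.ker_eq_bot, LinearMap.ker_eq_bot']
    intro x hx
    simp only [Matrix.mulVecLin_apply] at hx
    apply hinj
    have h2 : (Uᵀ *ᵥ x) ⬝ᵥ (Uᵀ *ᵥ x) = x ⬝ᵥ (G *ᵥ x) := by
      rw [hG, ← mulVec_mulVec, dotProduct_mulVec x, ← mulVec_transpose]
    rw [hx, dotProduct_zero] at h2
    exact dotProduct_self_eq_zero.1 h2
  have hd := (Matrix.isUnit_iff_isUnit_det _).1 hu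
  have hGi : G * G⁻¹ = 1 := Matrix.mul_nonsing_inv _ hd
  have hGs : (G⁻¹)ᵀ = G⁻¹ := by
    rw [transpose_nonsing_inv, hG, transpose_mul, transpose_transpose]
  obtain ⟨w, hw1, hw2, hw3, -⟩ := h
  have hw : U *ᵥ w = fun _ => 1 := by
    ext i; rw [← hyU]; exact hw3 i
  refine ⟨G⁻¹ *ᵥ fun _ => 1, fun i => ?_, ?_⟩
  · set e : Fin n → ℝ := Pi.single i 1 with he
    set v := Uᵀ *ᵥ (G⁻¹ *ᵥ e) with hv
    have hUv : U *ᵥ v = e := by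
      rw [hv, mulVec_mulVec, mulVec_mulVec, ← hG, hGi, one_mulVec]
    have hwv : w ⬝ᵥ v = (G⁻¹ *ᵥ fun _ => 1) i := by
      rw [hv, dotProduct_mulVec, vecMul_transpose, hw, dotProduct_mulVec, ← mulVec_transpose, hGs, he,
        dotProduct_single_one]
    rw [← hwv]
    by_contra hneg
    push Not at hneg
    have key : ∀ ε : ℝ, 0 ≤ ε → 0 ≤ 2 * ε * (w ⬝ᵥ v) + ε ^ 2 * (v ⬝ᵥ v) := by
      intro ε hε
      have hf : SVMfeas X y (w + ε • v) := by
        intro k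
        rw [hyU, mulVec_add, mulVec_smul, hUv, hw]
        simp only [Pi.add_apply, Pi.smul_apply, smul_eq_mul, he]
        have : (0 : ℝ) ≤ (Pi.single i (1 : ℝ) : Fin n → ℝ) k := by
          by_cases hk : k = i
          · subst hk; simp
          · simp [Pi.single_eq_of_ne hk]
        nlinarith [mul_nonneg hε this]
      have h1 := hw2 _ hf
      unfold enorm2 at h1
      rw [Real.sqrt_le_sqrt_iff (Finset.sum_nonneg fun _ _ => sq_nonneg _)] at h1
      have e1 : ∑ j, (w j) ^ 2 = w ⬝ᵥ w := by simp [dotProduct, sq]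
      have e2 : ∑ j, ((w + ε • v) j) ^ 2 = (w + ε • v) ⬝ᵥ (w + ε • v) := by simp [dotProduct, sq]
      rw [e1, e2, add_dotProduct, dotProduct_add, dotProduct_add, smul_dotProduct, smul_dotProduct,
        dotProduct_smul, dotProduct_smul, dotProduct_comm v w] at h1
      simp only [smul_eq_mul] at h1
      linarith
    have hvv : 0 ≤ v ⬝ᵥ v := by
      unfold dotProduct; exact Finset.sum_nonneg fun i _ => mul_self_nonneg _
    have h1 := key (-(w ⬝ᵥ v) / (v ⬝ᵥ v + 1)) (by apply div_nonneg <;> linarith)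
    set a := -(w ⬝ᵥ v) with ha
    set b := v ⬝ᵥ v with hb
    have ha0 : 0 < a := by linarith
    have hwa : w ⬝ᵥ v = -a := by simp [ha]
    rw [hwa] at h1
    have h2 : 2 * (a / (b + 1)) * -a + (a / (b + 1)) ^ 2 * b = -(a ^ 2 * (b + 2) / (b + 1) ^ 2) := by
      field_simp; ring
    rw [h2] at h1
    have : 0 < a ^ 2 * (b + 2) / (b + 1) ^ 2 := by positivity
    linarith
  · rw [mulVec_mulVec, mulVec_mulVec, ← hG, hGi, one_mulVec]

end svp

section qgood
variable {T A κ : Type*} [Fintype T] [Fintype A] [Fintype κ] [DecidableEq T] [DecidableEq A] [DecidableEq κ]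

open Classical in
lemma qT_good {lam : κ → ℝ} (hl : ∀ j, 0 < lam j) (hL : 0 < ∑ j, lam j) {z : T ⊕ A → κ → ℝ}
    (h : OpEv z lam (1 / 100)) (h2 : OpEv z (fun j => lam j ^ 2) (1 / 100)) {ρ : ℝ} (hρ : 0 < ρ)
    (h3 : ∀ j, |lam j * (∑ k : T, z (Sum.inl k) j) / (∑ j, lam j)| ≤ ρ / 24576)
    (hr1 : ρ / 2 ≤ Fintype.card T * (∑ j, lam j ^ 2) / (∑ j, lam j) ^ 2)
    (hr2 : Fintype.card T * (∑ j, lam j ^ 2) / (∑ j, lam j) ^ 2 ≤ ρ) :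
    ρ / 8 ≤ ∑ j, qT lam z j ^ 2 ∧ ∑ j, qT lam z j ^ 2 ≤ 3 * ρ ∧
    (∑ j, qT lam z j ^ 2) / 2 ≤ ∑ j, if |384 / ρ * qT lam z j| ≤ 1 / 16 then qT lam z j ^ 2 else 0 := by
  set L := ∑ j, lam j with hLd
  set L2 := ∑ j, lam j ^ 2 with hL2
  set nT : ℝ := ((Fintype.card T : ℕ) : ℝ) with hnT
  have hL20 : 0 ≤ L2 := Finset.sum_nonneg fun _ _ => sq_nonneg _
  have hnT0 : 0 ≤ nT := Nat.cast_nonneg _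
  set hh : T → ℝ := Hm lam z *ᵥ (fun _ => 1) with hhh
  set η : T → ℝ := fun k => hh k - 1 / L with hη
  set a0 : κ → ℝ := fun j => lam j * (∑ k : T, z (Sum.inl k) j) / L with ha0
  set ar : κ → ℝ := fun j => lam j * ∑ k : T, η k * z (Sum.inl k) j with har
  have hq : ∀ j, qT lam z j = lam j * ∑ k : T, hh k * z (Sum.inl k) j := fun j => by
    simp only [qT]
    rw [← hhh]
    simp only [mulVec, dotProduct, UTm, transpose_apply, of_apply]
    rw [Finset.mul_sum, Finset.mul_sum]
    refine Finset.sum_congr rfl fun k _ => ?_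
    have := Real.mul_self_sqrt (hl j).le
    linear_combination (z (Sum.inl k) j * hh k) * this
  have hqa : ∀ j, qT lam z j = a0 j + ar j := fun j => by
    rw [hq]; simp only [ha0, har, hη, sub_mul, Finset.sum_sub_distrib]
    rw [← Finset.mul_sum]; field_simp; ring
  -- quadratic form bound for weights lam^2
  have hQ : ∀ x : T → ℝ, |∑ j, (lam j * ∑ k, x k * z (Sum.inl k) j) ^ 2 - L2 * (x ⬝ᵥ x)| ≤
      1 / 100 * L2 * (x ⬝ᵥ x) := fun x => by
    have h1 := h2 (Sum.elim x 0) (Sum.elim x 0)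
    have h0 : 0 ≤ ∑ k, (Sum.elim x (0 : A → ℝ) k) ^ 2 := Finset.sum_nonneg fun _ _ => sq_nonneg _
    rw [mul_assoc, Real.mul_self_sqrt h0, elim_sq] at h1
    simp only [dotProduct_zero, add_zero] at h1
    have e : Bil z (fun j => lam j ^ 2) (Sum.elim x (0 : A → ℝ)) (Sum.elim x (0 : A → ℝ)) =
        ∑ j, (lam j * ∑ k, x k * z (Sum.inl k) j) ^ 2 - L2 * (x ⬝ᵥ x) := by
      unfold Bil
      simp only [Fintype.sum_sum_type, Sum.elim_inl, Sum.elim_inr, Pi.zero_apply, zero_mul,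
        Finset.sum_const_zero, add_zero, dotProduct]
      congr 1
      exact Finset.sum_congr rfl fun j _ => by ring
    rw [e] at h1
    exact h1
  have hone : (fun _ : T => (1 : ℝ)) ⬝ᵥ (fun _ : T => (1 : ℝ)) = nT := by simp [dotProduct, hnT]
  -- a0 norm
  set r := nT * L2 / L ^ 2 with hr
  have hA0 : |∑ j, a0 j ^ 2 - r| ≤ 1 / 100 * r := by
    have h1 := hQ (fun _ => 1 / L)
    have e1 : (fun _ : T => (1 / L : ℝ)) ⬝ᵥ (fun _ : T => (1 / L : ℝ)) = nT / L ^ 2 := by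
      simp [dotProduct, hnT]; field_simp
    rw [e1] at h1
    have e2 : ∑ j, (lam j * ∑ k : T, 1 / L * z (Sum.inl k) j) ^ 2 = ∑ j, a0 j ^ 2 :=
      Finset.sum_congr rfl fun j _ => by
        simp only [ha0]; rw [← Finset.mul_sum]; congr 1; field_simp
    rw [e2] at h1
    have e3 : L2 * (nT / L ^ 2) = r := by rw [hr]; ring
    have e4 : 1 / 100 * L2 * (nT / L ^ 2) = 1 / 100 * r := by rw [hr]; ring
    rwa [e3, e4] at h1
  -- eta norm
  have hηη0 : 0 ≤ η ⬝ᵥ η := by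
    unfold dotProduct; exact Finset.sum_nonneg fun i _ => mul_self_nonneg _
  have hηn : (η ⬝ᵥ η) * (9801 * L ^ 2) ≤ nT := by
    have h1 := (wquad_bd hl h η (0 : A → ℝ)).1
    have hb := wquad hl z η (fun _ => 1) (0 : A → ℝ) (0 : A → ℝ)
    simp only [mulVec_zero, add_zero, dotProduct_zero] at h1 hb
    have hsplit : η = hh - (1 / L) • (fun _ => (1 : ℝ)) := by
      ext k; simp [hη]
    have hGh : ((UTm lam z)ᵀ *ᵥ η) ⬝ᵥ ((UTm lam z)ᵀ *ᵥ hh) = η ⬝ᵥ (fun _ => 1) := by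
      rw [dotProduct_mulVec, vecMul_transpose, hhh, dotProduct_mulVec, ← mulVec_transpose, mulVec_mulVec,
        mulVec_mulVec]
      have hs : (Hm lam z)ᵀ = Hm lam z := by
        unfold Hm; rw [transpose_nonsing_inv, transpose_mul, transpose_transpose]
      rw [hs, Matrix.mul_assoc, (HG hl hL h).1, one_mulVec]
    have hηe : ((UTm lam z)ᵀ *ᵥ η) ⬝ᵥ ((UTm lam z)ᵀ *ᵥ η) =
        -(1 / L) * Bil z lam (Sum.elim η 0) (Sum.elim (fun _ => 1) 0) := by
      have : ((UTm lam z)ᵀ *ᵥ η) ⬝ᵥ ((UTm lam z)ᵀ *ᵥ η) =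
          ((UTm lam z)ᵀ *ᵥ η) ⬝ᵥ ((UTm lam z)ᵀ *ᵥ hh) -
            (1 / L) * (((UTm lam z)ᵀ *ᵥ η) ⬝ᵥ ((UTm lam z)ᵀ *ᵥ (fun _ => 1))) := by
        conv_lhs => enter [2]; rw [hsplit, mulVec_sub, mulVec_smul]
        rw [dotProduct_sub, dotProduct_smul, smul_eq_mul]
      rw [this, hGh, hb]; field_simp; ring
    rw [hηe] at h1
    have h4 := h (Sum.elim η 0) (Sum.elim (fun _ => 1) 0)
    rw [elim_sq, elim_sq] at h4
    simp only [dotProduct_zero, add_zero, hone] at h4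
    have h5 := (abs_le.1 h4).1
    have h6 : 99 / 100 * L * (η ⬝ᵥ η) ≤ 1 / 100 * (Real.sqrt (η ⬝ᵥ η) * Real.sqrt nT) := by
      refine h1.trans ?_
      have : -(1 / L) * Bil z lam (Sum.elim η 0) (Sum.elim (fun _ => 1) 0) ≤
          (1 / L) * (1 / 100 * L * Real.sqrt (η ⬝ᵥ η) * Real.sqrt nT) := by
        have hLi : 0 < 1 / L := by positivity
        nlinarith [mul_le_mul_of_nonneg_left h5 hLi.le]
      refine this.trans (le_of_eq ?_)
      field_simp
    set x := Real.sqrt (η ⬝ᵥ η) with hx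
    have hx2 : η ⬝ᵥ η = x ^ 2 := (Real.sq_sqrt hηη0).symm
    have hx0 : 0 ≤ x := Real.sqrt_nonneg _
    have hy2 : nT = Real.sqrt nT ^ 2 := (Real.sq_sqrt hnT0).symm
    set y := Real.sqrt nT with hy
    have hy0 : 0 ≤ y := Real.sqrt_nonneg _
    clear_value x y
    rw [hx2] at h6 ⊢
    rw [hy2]
    have h7 : 99 * L * x ≤ y := by
      rcases hx0.eq_or_lt with h0 | h0
      · rw [← h0]; simpa using hy0
      · have : x * (99 * L * x) ≤ x * y := by nlinarith
        exact le_of_mul_le_mul_left this h0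
    calc x ^ 2 * (9801 * L ^ 2) = (99 * L * x) ^ 2 := by ring
      _ ≤ _ := by gcongr
  have hAr : ∑ j, ar j ^ 2 ≤ 1 / 9000 * r := by
    have h1 := (abs_le.1 (hQ η)).2
    have h4 : ∑ j, ar j ^ 2 ≤ 101 / 100 * L2 * (η ⬝ᵥ η) := by
      have : ∑ j, ar j ^ 2 = ∑ j, (lam j * ∑ k, η k * z (Sum.inl k) j) ^ 2 := rfl
      linarith
    refine h4.trans ?_
    have h5 : η ⬝ᵥ η ≤ nT / (9801 * L ^ 2) := by
      rw [le_div_iff₀ (by positivity)]; exact hηn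
    calc 101 / 100 * L2 * (η ⬝ᵥ η) ≤ 101 / 100 * L2 * (nT / (9801 * L ^ 2)) := by gcongr
      _ = 101 / 980100 * r := by rw [hr]; field_simp; ring
      _ ≤ _ := by
        have : 0 ≤ r := by positivity
        nlinarith
  obtain ⟨hA1, hA2⟩ := abs_le.1 hA0
  have hlow : (∑ j, a0 j ^ 2) / 2 - ∑ j, ar j ^ 2 ≤ ∑ j, qT lam z j ^ 2 := by
    rw [Finset.sum_div, ← Finset.sum_sub_distrib]
    refine Finset.sum_le_sum fun j _ => ?_
    rw [hqa]; nlinarith [sq_nonneg (a0 j + 2 * ar j)]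
  have hup : ∑ j, qT lam z j ^ 2 ≤ 2 * (∑ j, a0 j ^ 2) + 2 * ∑ j, ar j ^ 2 := by
    rw [Finset.mul_sum, Finset.mul_sum, ← Finset.sum_add_distrib]
    refine Finset.sum_le_sum fun j _ => ?_
    rw [hqa]; nlinarith [sq_nonneg (a0 j - ar j)]
  have hV1 : ρ / 8 ≤ ∑ j, qT lam z j ^ 2 := by linarith
  refine ⟨hV1, by linarith, ?_⟩
  have hbad : ∑ j, qT lam z j ^ 2 - 4 * ∑ j, ar j ^ 2 ≤
      ∑ j, if |384 / ρ * qT lam z j| ≤ 1 / 16 then qT lam z j ^ 2 else 0 := by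
    rw [Finset.mul_sum, ← Finset.sum_sub_distrib]
    refine Finset.sum_le_sum fun j _ => ?_
    split_ifs with hj
    · nlinarith [sq_nonneg (ar j)]
    · push Not at hj
      rw [abs_mul, abs_of_pos (by positivity : 0 < 384 / ρ)] at hj
      have h4 : ρ / 6144 < |qT lam z j| := by
        rw [div_mul_eq_mul_div, lt_div_iff₀ hρ] at hj
        linarith
      have h5 : |a0 j| ≤ ρ / 24576 := h3 j
      have h6 : |qT lam z j| ≤ |a0 j| + |ar j| := by rw [hqa]; exact abs_add_le _ _
      have h7 : |qT lam z j| ≤ 2 * |ar j| := by linarith [abs_nonneg (qT lam z j)]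
      have : qT lam z j ^ 2 ≤ 4 * ar j ^ 2 := by
        rw [← sq_abs (qT lam z j), ← sq_abs (ar j)]
        nlinarith [abs_nonneg (qT lam z j)]
      linarith
  linarith

lemma qT_dep (lam : κ → ℝ) (z z' : T ⊕ A → κ → ℝ) (h : ∀ k, z (Sum.inl k) = z' (Sum.inl k)) :
    qT lam z = qT lam z' := by
  have : UTm lam z = UTm lam z' := by ext k j; simp [UTm, h]
  unfold qT Hm; rw [this]

lemma qI_dep (lam : κ → ℝ) (I : Finset A) (z z' : T ⊕ A → κ → ℝ)
    (h : ∀ k, z (Sum.inl k) = z' (Sum.inl k)) (h' : ∀ i ∈ I, z (Sum.inr i) = z' (Sum.inr i)) :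
    qI lam I z = qI lam I z' := by
  have h1 : UTm lam z = UTm lam z' := by ext k j; simp [UTm, h]
  have h2 : ((UAm lam z)ᵀ *ᵥ fun i => if i ∈ I then (1 : ℝ) else 0) =
      ((UAm lam z')ᵀ *ᵥ fun i => if i ∈ I then (1 : ℝ) else 0) := by
    ext j
    simp only [mulVec, dotProduct, transpose_apply, UAm, of_apply, mul_ite, mul_one, mul_zero]
    refine Finset.sum_congr rfl fun i _ => ?_
    split_ifs with hi
    · rw [h' i hi]
    · rfl
  unfold qI Pm Hm; rw [h1, h2]

lemma Hm_meas (lam : κ → ℝ) (k l : T) : Measurable fun z : T ⊕ A → κ → ℝ => Hm lam z k l := by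
  have hc : Continuous fun z : T ⊕ A → κ → ℝ => UTm lam z * (UTm lam z)ᵀ := by
    have : Continuous fun z : T ⊕ A → κ → ℝ => UTm lam z := by
      refine continuous_matrix fun i j => ?_
      simp only [UTm, of_apply]; fun_prop
    exact this.matrix_mul this.matrix_transpose
  have e : (fun z : T ⊕ A → κ → ℝ => Hm lam z k l) = fun z =>
      ((UTm lam z * (UTm lam z)ᵀ).det)⁻¹ * (UTm lam z * (UTm lam z)ᵀ).adjugate k l := by
    ext z
    rw [Hm, Matrix.inv_def, Ring.inverse_eq_inv', Matrix.smul_apply, smul_eq_mul]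
  rw [e]
  exact (hc.matrix_det.measurable.inv).mul ((hc.matrix_adjugate.matrix_elem k l).measurable)

lemma qT_meas (lam : κ → ℝ) : Measurable fun z : T ⊕ A → κ → ℝ => qT lam z := by
  have hH := Hm_meas (T := T) (A := A) lam
  refine measurable_pi_lambda _ fun j => ?_
  simp only [qT, mulVec, dotProduct, transpose_apply, UTm, of_apply]
  fun_prop

lemma qI_meas (lam : κ → ℝ) (I : Finset A) : Measurable fun z : T ⊕ A → κ → ℝ => qI lam I z := by
  have hH := Hm_meas (T := T) (A := A) lam
  refine measurable_pi_lambda _ fun j => ?_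
  simp only [qI, Pm, Matrix.mul_apply, mulVec, dotProduct, transpose_apply, UTm, UAm, of_apply, Matrix.sub_apply]
  fun_prop

end qgood
end SVPproof

namespace SVPproof
section events
variable {Ω : Type*} [MeasurableSpace Ω] {μ : Measure Ω}
variable {T A κ : Type*} [Fintype T] [Fintype A] [Fintype κ] [DecidableEq T] [DecidableEq A] [DecidableEq κ]

lemma mset_and {α : Type*} [MeasurableSpace α] {p q : α → Prop} (hp : MeasurableSet {a | p a})
    (hq : MeasurableSet {a | q a}) : MeasurableSet {a | p a ∧ q a} := hp.inter hq

lemma exp_theta {Q t : ℝ} (hQ : 1 ≤ Q) (ht : 1 ≤ t) : Real.exp (-(Q * t ^ 2)) ≤ Real.exp (-Q) / t := by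
  rw [le_div_iff₀ (by linarith)]
  have h1 : t ≤ Real.exp (Q * t ^ 2 - Q) := by
    have := Real.add_one_le_exp (Q * t ^ 2 - Q)
    nlinarith [mul_nonneg (sub_nonneg.2 hQ) (sub_nonneg.2 ht), mul_nonneg (mul_nonneg (sub_nonneg.2 hQ) (sub_nonneg.2 ht)) (by linarith : 0 ≤ t)]
  calc Real.exp (-(Q * t ^ 2)) * t ≤ Real.exp (-(Q * t ^ 2)) * Real.exp (Q * t ^ 2 - Q) := by gcongr
    _ = _ := by rw [← Real.exp_add]; congr 1; ring

lemma E3_prob [IsProbabilityMeasure μ] {Z : (T ⊕ A) × κ → Ω → ℝ} (h : StdFam μ Z) {lam : κ → ℝ} (hl : ∀ j, 0 < lam j)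
    (hL : 0 < ∑ j, lam j) {M : ℝ} (hM : ∀ j, lam j ≤ M) (hM0 : 0 < M) {c N Q : ℝ} (hc : 0 < c) (hN : 0 < N)
    (hT : (Fintype.card T : ℝ) ≤ N) (hQ : 1 ≤ Q) (hQ2 : Q ≤ (c * (∑ j, lam j)) ^ 2 / (2 * N * M ^ 2)) :
    μ.real {ω | ¬ ∀ j, |lam j * (∑ k, Z (Sum.inl k, j) ω) / (∑ j, lam j)| ≤ c} ≤
      2 * Real.exp (-Q) * ((∑ j, lam j) / M) := by
  set L := ∑ j, lam j with hLd
  have hsub : {ω | ¬ ∀ j, |lam j * (∑ k, Z (Sum.inl k, j) ω) / L| ≤ c} ⊆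
      ⋃ j, {ω | c * L / lam j ≤ |∑ k, Z (Sum.inl k, j) ω|} := by
    intro ω hω
    simp only [Set.mem_ofPred_eq, not_forall, not_le, Set.mem_iUnion] at hω ⊢
    obtain ⟨j, hj⟩ := hω
    refine ⟨j, ?_⟩
    rw [abs_div, abs_mul, abs_of_pos (hl j), abs_of_pos hL, lt_div_iff₀ hL] at hj
    rw [div_le_iff₀ (hl j)]; linarith
  refine (measureReal_mono hsub).trans ((measureReal_iUnion_fintype_le _).trans ?_)
  have : 2 * Real.exp (-Q) * (L / M) = ∑ j, 2 * (Real.exp (-Q) / (M / lam j)) := by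
    rw [hLd, Finset.sum_div, Finset.mul_sum]
    refine Finset.sum_congr rfl fun j _ => ?_
    have := (hl j).ne'
    field_simp
  rw [this]
  refine Finset.sum_le_sum fun j _ => ?_
  have hsg : SG μ (fun ω => ∑ k, Z (Sum.inl k, j) ω) (Fintype.card T) := by
    have := (h.precomp (g := fun k : T => ((Sum.inl k : T ⊕ A), j)) (fun a b hab => by simpa using hab)).lincomb (fun _ => 1)
    simpa using this
  have hlj := hl j
  refine (hsg.tail hT hN (by positivity)).trans ?_
  have h1 : 1 ≤ M / lam j := by rw [le_div_iff₀ hlj]; linarith [hM j]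
  refine mul_le_mul_of_nonneg_left (le_trans (Real.exp_le_exp.2 ?_) (exp_theta hQ h1)) (by norm_num)
  rw [neg_le_neg_iff]
  have : (c * L / lam j) ^ 2 / (2 * N) = (c * L) ^ 2 / (2 * N * M ^ 2) * (M / lam j) ^ 2 := by
    field_simp
  rw [this]
  gcongr

/-- The set of rows indexed by `T`. -/
def Trows (T A : Type*) [Fintype T] : Finset (T ⊕ A) := Finset.univ.map ⟨Sum.inl, Sum.inl_injective⟩

lemma inr_not_Trows (i : A) : (Sum.inr i : T ⊕ A) ∉ Trows T A := by simp [Trows]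
lemma inl_Trows (i : T) : (Sum.inl i : T ⊕ A) ∈ Trows T A := by simp [Trows]

lemma E5_prob [IsProbabilityMeasure μ] {Z : (T ⊕ A) × κ → Ω → ℝ} (h : StdFam μ Z) (lam : κ → ℝ) :
    μ.real {ω | (∑ j, (qT lam (fun i j => Z (i, j) ω) j) ^ 2 ≤ 1) ∧
      16 * (Fintype.card A : ℝ) < ∑ i : A, (∑ j, qT lam (fun i j => Z (i, j) ω) j * Z (Sum.inr i, j) ω) ^ 2}
      ≤ 2 ^ (Fintype.card A) * Real.exp (-(4 * (Fintype.card A : ℝ))) := by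
  refine freeze_rows h (Trows T A) (fun z => qT lam z) (qT_meas lam)
    (fun z z' hz => qT_dep lam z z' fun k => hz _ (inl_Trows k))
    {p | (∑ j, (p.1 j) ^ 2 ≤ 1) ∧ 16 * (Fintype.card A : ℝ) < ∑ i : A, (∑ j, p.1 j * p.2 (Sum.inr i) j) ^ 2}
    ?_ ?_ ?_
  · refine mset_and (measurableSet_le (by fun_prop) (by fun_prop)) (measurableSet_lt (by fun_prop) (by fun_prop))
  · rintro q z z' hz ⟨h1, h2⟩
    refine ⟨h1, ?_⟩
    have : ∀ i : A, z (Sum.inr i) = z' (Sum.inr i) := fun i => hz _ (inr_not_Trows i)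
    simpa only [this] using h2
  · intro q
    by_cases hq : ∑ j, (q j) ^ 2 ≤ 1
    · have := sumsq_tail (h.precomp (g := fun p : A × κ => ((Sum.inr p.1 : T ⊕ A), p.2))
        (fun a b hab => by simpa [Prod.ext_iff] using hab)) Finset.univ (m := Fintype.card A) (by simp) q one_pos hq
      refine le_trans (measureReal_mono ?_) this
      rintro ω ⟨_, h2⟩
      simpa using h2
    · simp [hq]; positivity

lemma E6_prob1 [IsProbabilityMeasure μ] {Z : (T ⊕ A) × κ → Ω → ℝ} (h : StdFam μ Z) (lam : κ → ℝ) (τ I : Finset A)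
    (hI : I ⊆ τ) {K : ℝ} (hK : 0 < K) :
    μ.real {ω | (∑ j, (qI lam I (fun i j => Z (i, j) ω) j) ^ 2 ≤ K) ∧
      16 * K * (Fintype.card A : ℝ) < ∑ i ∈ τᶜ, (∑ j, qI lam I (fun i j => Z (i, j) ω) j * Z (Sum.inr i, j) ω) ^ 2}
      ≤ 2 ^ (Fintype.card A) * Real.exp (-(4 * (Fintype.card A : ℝ))) := by
  refine freeze_rows h (Trows T A ∪ τ.map ⟨Sum.inr, Sum.inr_injective⟩) (fun z => qI lam I z) (qI_meas lam I)
    (fun z z' hz => qI_dep lam I z z' (fun k => hz _ (Finset.mem_union_left _ (inl_Trows k)))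
      (fun i hi => hz _ (Finset.mem_union_right _ (by simpa using hI hi))))
    {p | (∑ j, (p.1 j) ^ 2 ≤ K) ∧ 16 * K * (Fintype.card A : ℝ) < ∑ i ∈ τᶜ, (∑ j, p.1 j * p.2 (Sum.inr i) j) ^ 2}
    ?_ ?_ ?_
  · refine mset_and (measurableSet_le (by fun_prop) (by fun_prop)) (measurableSet_lt (by fun_prop) (by fun_prop))
  · rintro q z z' hz ⟨h1, h2⟩
    refine ⟨h1, ?_⟩
    have : ∀ i ∈ τᶜ, z (Sum.inr i) = z' (Sum.inr i) := fun i hi => hz _ (by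
      simp only [Finset.mem_union, not_or]
      exact ⟨inr_not_Trows i, by simpa using hi⟩)
    have e := Finset.sum_congr rfl fun i hi => show (∑ j, q j * z (Sum.inr i) j) ^ 2 = (∑ j, q j * z' (Sum.inr i) j) ^ 2 by rw [this i hi]
    exact lt_of_lt_of_eq h2 e
  · intro q
    by_cases hq : ∑ j, (q j) ^ 2 ≤ K
    · have := sumsq_tail (h.precomp (g := fun p : A × κ => ((Sum.inr p.1 : T ⊕ A), p.2))
        (fun a b hab => by simpa [Prod.ext_iff] using hab)) τᶜ (m := Fintype.card A) (Finset.card_le_univ _) q hK hq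
      refine le_trans (measureReal_mono ?_) this
      rintro ω ⟨_, h2⟩
      simpa using h2
    · simp [hq]; positivity

lemma E6_prob [IsProbabilityMeasure μ] {Z : (T ⊕ A) × κ → Ω → ℝ} (h : StdFam μ Z) (lam : κ → ℝ) (K : Finset A → ℝ)
    (hK : ∀ I, 0 < K I) :
    μ.real {ω | ∃ τ I : Finset A, I ⊆ τ ∧ (∑ j, (qI lam I (fun i j => Z (i, j) ω) j) ^ 2 ≤ K I) ∧
      16 * K I * (Fintype.card A : ℝ) < ∑ i ∈ τᶜ, (∑ j, qI lam I (fun i j => Z (i, j) ω) j * Z (Sum.inr i, j) ω) ^ 2}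
      ≤ 8 ^ (Fintype.card A) * Real.exp (-(4 * (Fintype.card A : ℝ))) := by
  have hsub : {ω | ∃ τ I : Finset A, I ⊆ τ ∧ (∑ j, (qI lam I (fun i j => Z (i, j) ω) j) ^ 2 ≤ K I) ∧
      16 * K I * (Fintype.card A : ℝ) < ∑ i ∈ τᶜ, (∑ j, qI lam I (fun i j => Z (i, j) ω) j * Z (Sum.inr i, j) ω) ^ 2}
     ⊆ ⋃ p : Finset A × Finset A, {ω | p.2 ⊆ p.1 ∧ (∑ j, (qI lam p.2 (fun i j => Z (i, j) ω) j) ^ 2 ≤ K p.2) ∧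
      16 * K p.2 * (Fintype.card A : ℝ) < ∑ i ∈ p.1ᶜ, (∑ j, qI lam p.2 (fun i j => Z (i, j) ω) j * Z (Sum.inr i, j) ω) ^ 2} := by
    rintro ω ⟨τ, I, hh⟩
    exact Set.mem_iUnion.2 ⟨(τ, I), hh⟩
  refine (measureReal_mono hsub).trans ((measureReal_iUnion_fintype_le _).trans ?_)
  refine (Finset.sum_le_sum (g := fun _ => 2 ^ (Fintype.card A) * Real.exp (-(4 * (Fintype.card A : ℝ)))) fun p _ => ?_).trans ?_
  · by_cases hp : p.2 ⊆ p.1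
    · simpa only [hp, true_and] using E6_prob1 h lam p.1 p.2 hp (hK p.2)
    · simp [hp]; positivity
  · rw [Finset.sum_const, Finset.card_univ, Fintype.card_prod, Fintype.card_finset, nsmul_eq_mul, ← mul_assoc]
    apply le_of_eq; congr 1
    push_cast
    rw [← mul_pow, ← mul_pow]; norm_num

open Classical in
/-- The admissible coefficient vectors for the anti-concentration bound. -/
def goodq (ρ : ℝ) (q : κ → ℝ) : Prop :=
  ρ / 8 ≤ ∑ j, (q j) ^ 2 ∧ ∑ j, (q j) ^ 2 ≤ 3 * ρ ∧
    (∑ j, (q j) ^ 2) / 2 ≤ ∑ j, if |384 / ρ * q j| ≤ 1 / 16 then (q j) ^ 2 else 0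

open Classical in
lemma goodq_meas (ρ : ℝ) : MeasurableSet {q : κ → ℝ | goodq ρ q} := by
  unfold goodq
  refine mset_and (measurableSet_le (by fun_prop) (by fun_prop))
    (mset_and (measurableSet_le (by fun_prop) (by fun_prop)) (measurableSet_le (by fun_prop) ?_))
  refine Finset.measurable_sum _ fun j _ => Measurable.ite (measurableSet_le (by fun_prop) (by fun_prop)) (by fun_prop) (by fun_prop)

open Classical in
lemma E4_prob [IsProbabilityMeasure μ] {Z : (T ⊕ A) × κ → Ω → ℝ} (h : StdFam μ Z) (lam : κ → ℝ) {ρ p : ℝ}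
    (hρ : 0 < ρ) (hρ1 : ρ ≤ 1) (hp0 : 0 ≤ p) (hp : p ≤ 1 / 4 * Real.exp (-(884736 / ρ))) :
    μ.real {ω | goodq ρ (qT lam (fun i j => Z (i, j) ω)) ∧
      ((Finset.univ.filter fun i : A => 2 ≤ ∑ j, qT lam (fun i j => Z (i, j) ω) j * Z (Sum.inr i, j) ω).card : ℝ) ≤
        p * Fintype.card A / 4}
      ≤ Real.exp (-(p * Fintype.card A / 4)) := by
  refine freeze_rows h (Trows T A) (fun z => qT lam z) (qT_meas lam)
    (fun z z' hz => qT_dep lam z z' fun k => hz _ (inl_Trows k))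
    {x | goodq ρ x.1 ∧ ((Finset.univ.filter fun i : A => 2 ≤ ∑ j, x.1 j * x.2 (Sum.inr i) j).card : ℝ) ≤
        p * Fintype.card A / 4}
    ?_ ?_ ?_
  · refine mset_and (measurable_fst (goodq_meas ρ)) (measurableSet_le ?_ (by fun_prop))
    simp_rw [Finset.card_filter]
    push_cast
    refine Finset.measurable_sum _ fun i _ => Measurable.ite (measurableSet_le (by fun_prop) (by fun_prop)) (by fun_prop) (by fun_prop)
  · rintro q z z' hz ⟨h1, h2⟩
    refine ⟨h1, ?_⟩
    have : ∀ i : A, z (Sum.inr i) = z' (Sum.inr i) := fun i => hz _ (inr_not_Trows i)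
    simpa only [this] using h2
  · intro q
    by_cases hq : goodq ρ q
    · have hA := h.precomp (g := fun p : A × κ => ((Sum.inr p.1 : T ⊕ A), p.2))
        (fun a b hab => by simpa [Prod.ext_iff] using hab)
      have hi : iIndepFun (fun (i : A) ω => ∑ j, q j * Z (Sum.inr i, j) ω) μ :=
        (rows_indep hA).comp (fun _ v => ∑ j, q j * v j) (fun _ => by fun_prop)
      have hme : ∀ i : A, Measurable (fun ω => ∑ j, q j * Z (Sum.inr i, j) ω) := fun i => by
        have := h.meas
        fun_prop
      obtain ⟨g1, g2, g3⟩ := hq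
      have := count_tail hi hme (p := p) (fun i => by
        refine hp.trans (le_trans ?_ (anticonc (h.precomp (g := fun j : κ => ((Sum.inr i : T ⊕ A), j))
          (fun a b hab => by simpa using hab)) q (θ := 384 / ρ) ?_ ?_ g3))
        · refine mul_le_mul_of_nonneg_left (Real.exp_le_exp.2 (neg_le_neg ?_)) (by norm_num)
          calc 2 * (384 / ρ) ^ 2 * ∑ j, q j ^ 2 ≤ 2 * (384 / ρ) ^ 2 * (3 * ρ) := by gcongr
            _ = 884736 / ρ := by field_simp; norm_num
        · rw [le_div_iff₀ hρ]; linarith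
        · calc (48 : ℝ) = 384 / ρ * (ρ / 8) := by field_simp; norm_num
            _ ≤ _ := by gcongr)
      refine le_trans (measureReal_mono ?_) this
      rintro ω ⟨_, h2⟩
      exact h2
    · simp [hq]; positivity

end events
end SVPproof

namespace SVPproof
section core
variable {Ω : Type*} [MeasurableSpace Ω] {μ : Measure Ω}
variable {T A κ : Type*} [Fintype T] [Fintype A] [Fintype κ] [DecidableEq T] [DecidableEq A] [DecidableEq κ]

/-- The event that the interpolation dual has a solution with nonnegative coordinates on `A`. -/
def BetaEv (lam : κ → ℝ) (z : T ⊕ A → κ → ℝ) : Prop :=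
  ∃ (bT : T → ℝ) (bA : A → ℝ), (∀ i, 0 ≤ bA i) ∧
    (UTm lam z *ᵥ ((UTm lam z)ᵀ *ᵥ bT + (UAm lam z)ᵀ *ᵥ bA) = fun _ => 1) ∧
    (UAm lam z *ᵥ ((UTm lam z)ᵀ *ᵥ bT + (UAm lam z)ᵀ *ᵥ bA) = fun _ => 1)

open Classical in
lemma det_false {lam : κ → ℝ} (hl : ∀ j, 0 < lam j) (hL : 0 < ∑ j, lam j) {z : T ⊕ A → κ → ℝ} {M ρ p : ℝ}
    (hM : ∀ j, lam j ≤ M) (hM0 : 0 < M) (hρ : 0 < ρ) (hρ3 : 3 * ρ ≤ 1)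
    (hr1 : ρ / 2 ≤ (Fintype.card T : ℝ) * (∑ j, lam j ^ 2) / (∑ j, lam j) ^ 2)
    (hr2 : (Fintype.card T : ℝ) * (∑ j, lam j ^ 2) / (∑ j, lam j) ^ 2 ≤ ρ)
    (hpm : 1 ≤ p * Fintype.card A / 4)
    (hbig : 139264 * M * (Fintype.card A : ℝ) ^ 2 < (∑ j, lam j) * (p * Fintype.card A / 4))
    (h1 : OpEv z lam (1 / 100)) (h2 : OpEv z (fun j => lam j ^ 2) (1 / 100))
    (h3 : ∀ j, |lam j * (∑ k, z (Sum.inl k) j) / (∑ j, lam j)| ≤ ρ / 24576)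
    (h4 : ¬ (goodq ρ (qT lam z) ∧ ((Finset.univ.filter fun i : A => 2 ≤ ∑ j, qT lam z j * z (Sum.inr i) j).card : ℝ) ≤
        p * Fintype.card A / 4))
    (h5 : ¬ ((∑ j, (qT lam z j) ^ 2 ≤ 1) ∧
      16 * (Fintype.card A : ℝ) < ∑ i : A, (∑ j, qT lam z j * z (Sum.inr i) j) ^ 2))
    (h6 : ¬ ∃ τ I : Finset A, I ⊆ τ ∧ (∑ j, (qI lam I z j) ^ 2 ≤ 2 * M * (∑ j, lam j) * (I.card + 1)) ∧
      16 * (2 * M * (∑ j, lam j) * (I.card + 1)) * (Fintype.card A : ℝ) <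
        ∑ i ∈ τᶜ, (∑ j, qI lam I z j * z (Sum.inr i) j) ^ 2)
    (hb : BetaEv lam z) : False := by
  obtain ⟨bT, bA, hb0, hbT, hbA⟩ := hb
  have hg := qT_good hl hL h1 h2 hρ h3 hr1 hr2
  have hS : p * Fintype.card A / 4 < ((Finset.univ.filter fun i : A => 2 ≤ ∑ j, qT lam z j * z (Sum.inr i) j).card : ℝ) := by
    by_contra hcon
    exact h4 ⟨hg, not_lt.1 hcon⟩
  have h5' : ∑ i : A, (∑ j, qT lam z j * z (Sum.inr i) j) ^ 2 ≤ 16 * (Fintype.card A : ℝ) := by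
    by_contra hcon
    exact h5 ⟨hg.2.1.trans hρ3, not_le.1 hcon⟩
  have h6' : ∀ τ I : Finset A, I ⊆ τ → ∑ l ∈ τᶜ, (∑ j, qI lam I z j * z (Sum.inr l) j) ^ 2 ≤
      16 * (2 * M * (∑ j, lam j) * (I.card + 1)) * (Fintype.card A : ℝ) := by
    intro τ I hI
    by_contra hcon
    exact h6 ⟨τ, I, hI, by convert qI_norm hl hL h1 hM hM0 I, by convert not_le.1 hcon⟩
  have := det_bound hl hL h1 hM hM0 hb0 (by convert hbT) (by convert hbA) (by convert h5')
    (fun τ I hI => by convert h6' τ I hI) (Finset.univ.filter fun i : A => 2 ≤ ∑ j, qT lam z j * z (Sum.inr i) j)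
    (fun i hi => by simpa using hi)
  set s : ℝ := ((Finset.univ.filter fun i : A => 2 ≤ ∑ j, qT lam z j * z (Sum.inr i) j).card : ℝ)
  set L := ∑ j, lam j
  set m := (Fintype.card A : ℝ)
  have hs1 : 1 < s := by linarith
  have e1 : 69632 * M * (s + 1) * m ^ 2 ≤ 139264 * M * m ^ 2 * s := by
    have : 0 ≤ 69632 * M * m ^ 2 := by positivity
    nlinarith
  have e2 : s * (s * L) ≤ s * (139264 * M * m ^ 2) := by nlinarith
  have e3 := le_of_mul_le_mul_left e2 (by linarith)
  nlinarith

lemma core_prob [IsProbabilityMeasure μ] {Z : (T ⊕ A) × κ → Ω → ℝ} (h : StdFam μ Z)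
    {lam : κ → ℝ} (hl : ∀ j, 0 < lam j) (hL : 0 < ∑ j, lam j) {M ρ p N Q : ℝ}
    (hM : ∀ j, lam j ≤ M) (hM0 : 0 < M) (hρ : 0 < ρ) (hρ3 : 3 * ρ ≤ 1)
    (hr1 : ρ / 2 ≤ (Fintype.card T : ℝ) * (∑ j, lam j ^ 2) / (∑ j, lam j) ^ 2)
    (hr2 : (Fintype.card T : ℝ) * (∑ j, lam j ^ 2) / (∑ j, lam j) ^ 2 ≤ ρ)
    (hp0 : 0 ≤ p) (hp : p ≤ 1 / 4 * Real.exp (-(884736 / ρ)))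
    (hpm : 1 ≤ p * Fintype.card A / 4)
    (hbig : 139264 * M * (Fintype.card A : ℝ) ^ 2 < (∑ j, lam j) * (p * Fintype.card A / 4))
    (hN : 0 < N) (hT : (Fintype.card T : ℝ) ≤ N) (hQ : 1 ≤ Q)
    (hQ2 : Q ≤ (ρ / 24576 * (∑ j, lam j)) ^ 2 / (2 * N * M ^ 2)) :
    μ.real {ω | OpEv (fun i j => Z (i, j) ω) lam (1 / 100) → BetaEv lam (fun i j => Z (i, j) ω)} ≤
      25 ^ (Fintype.card (T ⊕ A)) * (4 * Real.exp (-((1 / 400 : ℝ) ^ 2 * (∑ j, lam j) / (1024 * M)))) +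
      (25 ^ (Fintype.card (T ⊕ A)) * (4 * Real.exp (-((1 / 400 : ℝ) ^ 2 * (∑ j, lam j ^ 2) / (1024 * M ^ 2)))) +
      (2 * Real.exp (-Q) * ((∑ j, lam j) / M) +
      (Real.exp (-(p * Fintype.card A / 4)) +
      (2 ^ (Fintype.card A) * Real.exp (-(4 * (Fintype.card A : ℝ))) +
       8 ^ (Fintype.card A) * Real.exp (-(4 * (Fintype.card A : ℝ))))))) := by
  have p1 := OpEv_prob h hM0 (fun j => (hl j).le) hM (ε := 1 / 400) (by norm_num) (by norm_num)
  have p2 := OpEv_prob h (ν := fun j => lam j ^ 2) (M := M ^ 2) (by positivity) (fun j => by positivity)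
    (fun j => pow_le_pow_left₀ (hl j).le (hM j) 2) (ε := 1 / 400) (by norm_num) (by norm_num)
  rw [show (4 * (1 / 400) : ℝ) = 1 / 100 by norm_num] at p1 p2
  have p3 := E3_prob h hl hL hM hM0 (c := ρ / 24576) (by positivity) hN hT hQ hQ2
  have p4 := E4_prob h lam hρ (by linarith) hp0 hp
  have p5 := E5_prob h lam
  have p6 := E6_prob h lam (fun I => 2 * M * (∑ j, lam j) * (I.card + 1)) (fun I => by positivity)
  refine le_trans (le_trans (measureReal_mono ?_ ) (measureReal_union_le _ _)) (add_le_add p1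
    ((measureReal_union_le _ _).trans (add_le_add p2 ((measureReal_union_le _ _).trans (add_le_add p3
    ((measureReal_union_le _ _).trans (add_le_add p4 ((measureReal_union_le _ _).trans (add_le_add p5 p6)))))))))
  intro ω hω
  by_contra hcon
  simp only [Set.mem_union, not_or] at hcon
  obtain ⟨c1, c2, c3, c4, c5, c6⟩ := hcon
  exact det_false hl hL hM hM0 hρ hρ3 hr1 hr2 hpm hbig (not_not.1 c1) (not_not.1 c2) (not_not.1 c3) c4 c5 c6 (hω (not_not.1 c1))

end core

lemma exp_small {b : ℝ} (hb : 256 ≤ b) : 16 * Real.exp (-(2 * b ^ 8)) ≤ Real.exp (-(b ^ 8)) := by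
  have h1 : (16 : ℝ) ≤ Real.exp (b ^ 8) := by
    have := Real.add_one_le_exp (b ^ 8)
    have : (256 : ℝ) ^ 8 ≤ b ^ 8 := pow_le_pow_left₀ (by norm_num) hb 8
    norm_num at this
    linarith
  calc 16 * Real.exp (-(2 * b ^ 8)) ≤ Real.exp (b ^ 8) * Real.exp (-(2 * b ^ 8)) := by gcongr
    _ = _ := by rw [← Real.exp_add]; congr 1; ring

lemma pow_exp_bd {c k : ℝ} {m : ℕ} (hc0 : 0 ≤ c) (hc : c ≤ Real.exp k) (x : ℝ) :
    c ^ m * Real.exp x ≤ Real.exp (k * m + x) := by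
  rw [Real.exp_add, mul_comm k, Real.exp_nat_mul]
  gcongr

lemma e_bd : (25 : ℝ) ≤ Real.exp 4 ∧ (8 : ℝ) ≤ Real.exp 3 ∧ (2 : ℝ) ≤ Real.exp 3 := by
  have h := Real.exp_one_gt_d9
  have h1 : (2.7 : ℝ) ≤ Real.exp 1 := by linarith
  have e4 : Real.exp 4 = Real.exp 1 ^ 4 := by rw [← Real.exp_nat_mul]; norm_num
  have e3 : Real.exp 3 = Real.exp 1 ^ 3 := by rw [← Real.exp_nat_mul]; norm_num
  have k4 := pow_le_pow_left₀ (by norm_num) h1 4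
  have k3 := pow_le_pow_left₀ (by norm_num) h1 3
  rw [e4, e3]
  norm_num at k4 k3 ⊢
  refine ⟨by linarith, by linarith, by linarith⟩

/-- Sum of the failure probabilities. -/
lemma numeric {b D2 Di R2 Q p : ℝ} {n m : ℕ} (hb : 256 ≤ b) (hn : (n : ℝ) = b ^ 16) (hm : b ^ 12 ≤ m)
    (hDi : 1000000000 * (n : ℝ) ≤ Di) (hR2 : 1000000000 * (n : ℝ) ≤ R2) (hQ : 1000000 * b ^ 15 ≤ Q) (hDD : Di ≤ n ^ 2)
    (hp : p = 1 / (4 * b)) :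
    25 ^ n * (4 * Real.exp (-((1 / 400 : ℝ) ^ 2 * Di / 1024))) +
      (25 ^ n * (4 * Real.exp (-((1 / 400 : ℝ) ^ 2 * R2 / 1024))) +
      (2 * Real.exp (-Q) * Di +
      (Real.exp (-(p * m / 4)) +
      (2 ^ m * Real.exp (-(4 * (m : ℝ))) + 8 ^ m * Real.exp (-(4 * (m : ℝ))))))) ≤ Real.exp (-(b ^ 8)) := by
  obtain ⟨k25, k8, k2⟩ := e_bd
  have hb0 : 0 < b := by linarith
  have b8 : (1 : ℝ) ≤ b ^ 8 := one_le_pow₀ (by linarith)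
  have hpow : ∀ k : ℕ, (256 : ℝ) ^ k ≤ b ^ k := fun k => pow_le_pow_left₀ (by norm_num) hb k
  have c16 : 2 * b ^ 8 ≤ b ^ 16 := by
    have := hpow 8
    have e : b ^ 16 = b ^ 8 * b ^ 8 := by ring
    rw [e]; norm_num at this; gcongr; linarith
  have c12 : 2 * b ^ 8 ≤ b ^ 12 := by
    have := hpow 4
    have e : b ^ 12 = b ^ 4 * b ^ 8 := by ring
    rw [e]; norm_num at this; gcongr; linarith
  have gen : ∀ R : ℝ, 1000000000 * (n : ℝ) ≤ R →
      25 ^ n * (4 * Real.exp (-((1 / 400 : ℝ) ^ 2 * R / 1024))) ≤ 4 * Real.exp (-(2 * b ^ 8)) := by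
    intro R hR
    calc _ = 4 * (25 ^ n * Real.exp (-((1 / 400 : ℝ) ^ 2 * R / 1024))) := by ring
      _ ≤ 4 * Real.exp (4 * n + (-((1 / 400 : ℝ) ^ 2 * R / 1024))) := by gcongr; exact pow_exp_bd (by norm_num) k25 _
      _ ≤ _ := by
        gcongr
        have : (0 : ℝ) ≤ n := by positivity
        norm_num
        linarith
  have t1 := gen _ hDi
  have t2 := gen _ hR2
  have t3 : 2 * Real.exp (-Q) * Di ≤ 2 * Real.exp (-(2 * b ^ 8)) := by
    have d1 : Di ≤ Real.exp (32 * b) := by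
      refine hDD.trans ?_
      rw [hn]
      have : b ≤ Real.exp b := by linarith [Real.add_one_le_exp b]
      calc (b ^ 16) ^ 2 = b ^ 32 := by ring
        _ ≤ Real.exp b ^ 32 := by gcongr
        _ = Real.exp (32 * b) := by rw [← Real.exp_nat_mul]; norm_num
    calc 2 * Real.exp (-Q) * Di ≤ 2 * Real.exp (-Q) * Real.exp (32 * b) := by gcongr
      _ = 2 * Real.exp (-Q + 32 * b) := by rw [mul_assoc, ← Real.exp_add]
      _ ≤ _ := by
        gcongr
        have e1 : b ^ 8 ≤ b ^ 15 := pow_le_pow_right₀ (by linarith) (by norm_num)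
        have e2 : b ^ 1 ≤ b ^ 15 := pow_le_pow_right₀ (by linarith) (by norm_num)
        have : 0 < b ^ 15 := by positivity
        rw [pow_one] at e2
        linarith
  have t4 : Real.exp (-(p * m / 4)) ≤ Real.exp (-(2 * b ^ 8)) := by
    apply Real.exp_le_exp.2
    have : 2 * b ^ 8 ≤ p * m / 4 := by
      calc 2 * b ^ 8 ≤ p * b ^ 12 / 4 := by
            rw [hp]
            have e : 1 / (4 * b) * b ^ 12 / 4 = b ^ 3 / 16 * b ^ 8 := by field_simp; norm_num
            rw [e]
            have := hpow 3
            norm_num at this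
            gcongr; linarith
        _ ≤ _ := by
          have : 0 ≤ p := by rw [hp]; positivity
          gcongr
    linarith
  have t56 : ∀ c : ℝ, 0 ≤ c → c ≤ Real.exp 3 → c ^ m * Real.exp (-(4 * (m : ℝ))) ≤ Real.exp (-(2 * b ^ 8)) := by
    intro c hc0 hc
    refine (pow_exp_bd hc0 hc _).trans (Real.exp_le_exp.2 ?_)
    linarith
  have t5 := t56 2 (by norm_num) k2
  have t6 := t56 8 (by norm_num) k8
  have := exp_small hb
  have := Real.exp_pos (-(2 * b ^ 8))
  linarith

end SVPproof

namespace SVPproof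

lemma StdFam.sign {Ω ι : Type*} [MeasurableSpace Ω] {μ : Measure Ω} {W : ι → Ω → ℝ} (h : StdFam μ W)
    {s : ι → ℝ} (hs : ∀ i, s i = 1 ∨ s i = -1) : StdFam μ (fun i ω => s i * W i ω) := by
  have hm := h.meas
  refine ⟨fun i => by fun_prop, h.indep.comp (fun i x => s i * x) (fun i => by fun_prop), ?_, ?_, ?_, ?_⟩
  · intro i; rw [integral_const_mul, h.mean, mul_zero]
  · intro i
    have : s i ^ 2 = 1 := by rcases hs i with e | e <;> rw [e] <;> norm_num
    simp_rw [mul_pow, this, one_mul]; exact h.var i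
  · intro i t
    simpa only [mul_assoc] using h.int i (t * s i)
  · intro i t
    have : s i ^ 2 = 1 := by rcases hs i with e | e <;> rw [e] <;> norm_num
    have h2 := h.subg i (t * s i)
    simpa only [mul_assoc, mul_pow, this, mul_one] using h2

lemma beta_of_SVP {n d : ℕ} {T A : Type*} [Fintype T] [Fintype A] [DecidableEq T] [DecidableEq A]
    (e : T ⊕ A ≃ Fin n) {lam : Fin d → ℝ} (hl : ∀ j, 0 < lam j) (hL : 0 < ∑ j, lam j)
    {X : Matrix (Fin n) (Fin d) ℝ} {y : Fin n → ℝ} {z : T ⊕ A → Fin d → ℝ}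
    (hz : ∀ i j, Real.sqrt (lam j) * z i j = y (e i) * X (e i) j) (h1 : OpEv z lam (1 / 100))
    (h : SVPholds X y) : BetaEv lam z := by
  set U : Matrix (Fin n) (Fin d) ℝ := Matrix.of fun i j => y i * X i j with hU
  have key : ∀ x : Fin n → ℝ, Uᵀ *ᵥ x = (UTm lam z)ᵀ *ᵥ (fun k => x (e (Sum.inl k))) +
      (UAm lam z)ᵀ *ᵥ (fun k => x (e (Sum.inr k))) := by
    intro x
    funext j
    simp only [Matrix.mulVec, dotProduct, Matrix.transpose_apply, Pi.add_apply, hU, UTm, UAm, Matrix.of_apply, hz]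
    rw [← Equiv.sum_comp e, Fintype.sum_sum_type]
  obtain ⟨β, hβ0, hβ⟩ := SVP_beta h U (fun i j => rfl) (by
    intro x hx
    have hb := wquad_bd hl h1 (fun k => x (e (Sum.inl k))) (fun k => x (e (Sum.inr k)))
    rw [← key, hx] at hb
    have hb1 := hb.1
    simp only [zero_dotProduct] at hb1
    have hs : ∑ i, x i ^ 2 = (fun k => x (e (Sum.inl k))) ⬝ᵥ (fun k => x (e (Sum.inl k))) +
        (fun k => x (e (Sum.inr k))) ⬝ᵥ (fun k => x (e (Sum.inr k))) := by
      rw [← Equiv.sum_comp e, Fintype.sum_sum_type]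
      simp only [dotProduct, pow_two]
    rw [← hs] at hb1
    have h0 : ∑ i, x i ^ 2 ≤ 0 := by
      by_contra hcon
      push Not at hcon
      have := mul_pos hL hcon
      nlinarith
    funext i
    have := (Finset.sum_eq_zero_iff_of_nonneg (fun i _ => sq_nonneg (x i))).1
      (le_antisymm h0 (Finset.sum_nonneg fun i _ => sq_nonneg (x i))) i (Finset.mem_univ i)
    simpa using this)
  refine ⟨fun k => β (e (Sum.inl k)), fun k => β (e (Sum.inr k)), fun i => hβ0 _, ?_, ?_⟩
  · rw [← key]
    funext k
    have := congrFun hβ (e (Sum.inl k))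
    rw [← this]
    simp only [Matrix.mulVec, dotProduct, UTm, hU, Matrix.of_apply, hz]
  · rw [← key]
    funext k
    have := congrFun hβ (e (Sum.inr k))
    rw [← this]
    simp only [Matrix.mulVec, dotProduct, UAm, hU, Matrix.of_apply, hz]


set_option maxHeartbeats 2000000 in
lemma main_bound {Ω : Type*} [MeasurableSpace Ω] {μ : Measure Ω} [IsProbabilityMeasure μ] {n d : ℕ} (hd : 0 < d)
    {lam : Fin d → ℝ} {Z X : Ω → Matrix (Fin n) (Fin d) ℝ} {y : Fin n → ℝ} (h : IsAnisoSample μ lam Z X y)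
    {δ : ℝ} (hδ0 : 0 < δ) (hδ : δ < 1 / 2) (hn1 : 2 ^ 130 * (Real.log (1 / δ)) ^ 2 ≤ n)
    (hd2 : dim2 lam ≤ 1 / 16000000 * n * Real.log n)
    (hdi : 2000000000 * n * Real.log (1 / δ) ≤ dimInf lam)
    (hdd : 2000000000 * dim2 lam * n ≤ (dimInf lam) ^ 2) :
    μ.real {ω | SVPholds (X ω) y} ≤ δ := by
  have hl := h.lam_pos
  haveI : Nonempty (Fin d) := ⟨⟨0, hd⟩⟩
  set L := ∑ j, lam j with hLdef
  set M := ⨆ j, lam j with hMdef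
  set S2 := ∑ j, lam j ^ 2 with hS2def
  have hM : ∀ j, lam j ≤ M := fun j => le_ciSup (f := lam) (Set.finite_range _).bddAbove j
  have hM0 : 0 < M := (hl ⟨0, hd⟩).trans_le (hM _)
  have hL : 0 < L := Finset.sum_pos (fun j _ => hl j) Finset.univ_nonempty
  have hS2 : 0 < S2 := Finset.sum_pos (fun j _ => pow_pos (hl j) 2) Finset.univ_nonempty
  have hS2M : S2 ≤ M * L := by
    rw [hS2def, hLdef, Finset.mul_sum]
    refine Finset.sum_le_sum fun j _ => ?_
    rw [pow_two]
    exact mul_le_mul_of_nonneg_right (hM j) (hl j).le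
  set D2 := dim2 lam with hD2
  set Di := dimInf lam with hDi
  have eD2 : D2 = L ^ 2 / S2 := rfl
  have eDi : Di = L / M := rfl
  have D2pos : 0 < D2 := by rw [eD2]; positivity
  have Dipos : 0 < Di := by rw [eDi]; positivity
  have hDiD2 : Di ≤ D2 := by
    rw [eD2, eDi, div_le_div_iff₀ hM0 hS2]
    calc L * S2 ≤ L * (M * L) := by gcongr
      _ = _ := by ring
  -- size of the logarithm
  have hlog : 1 / 2 < Real.log (1 / δ) := by
    have : Real.log 2 ≤ Real.log (1 / δ) := by
      apply Real.log_le_log (by norm_num)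
      rw [le_div_iff₀ hδ0]; linarith
    linarith [Real.log_two_gt_d9]
  have hn128 : (2 : ℝ) ^ 128 ≤ n :=
    calc (2 : ℝ) ^ 128 = 2 ^ 130 * (1 / 2) ^ 2 := by norm_num
      _ ≤ 2 ^ 130 * (Real.log (1 / δ)) ^ 2 := by gcongr
      _ ≤ n := hn1
  have hn0 : (0 : ℝ) < n := lt_of_lt_of_le (by norm_num) hn128
  set b : ℝ := (n : ℝ) ^ ((1 : ℝ) / 16) with hbdef
  have hb0 : 0 < b := Real.rpow_pos_of_pos hn0 _
  have hbn : (n : ℝ) = b ^ 16 := by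
    rw [hbdef, ← Real.rpow_natCast, ← Real.rpow_mul hn0.le]; norm_num
  have hb : 256 ≤ b := by
    refine le_of_pow_le_pow_left₀ (n := 16) (by norm_num) hb0.le ?_
    rw [← hbn]; exact le_trans (by norm_num) hn128
  have hlogn : Real.log n = 16 * Real.log b := by
    rw [hbn, Real.log_pow]; norm_num
  have hlogb : Real.log b ≤ b := (Real.log_le_sub_one_of_pos hb0).trans (by linarith)
  have hlogb1 : 0 ≤ Real.log b := Real.log_nonneg (by linarith)
  have hD2b : D2 ≤ 1 / 1000000 * n * Real.log b := by rw [hlogn] at hd2; linarith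
  have hD2b2 : D2 ≤ 1 / 1000000 * n * b := hD2b.trans (by gcongr)
  have hδb : Real.exp (-(b ^ 8)) ≤ δ := by
    have h1 : Real.log (1 / δ) ≤ b ^ 8 := by
      refine le_of_pow_le_pow_left₀ (n := 2) (by norm_num) (by positivity) ?_
      have : (b ^ 8) ^ 2 = n := by rw [hbn]; ring
      rw [this]
      exact (le_mul_of_one_le_left (sq_nonneg _) (by norm_num)).trans hn1
    rw [one_div, Real.log_inv] at h1
    calc Real.exp (-(b ^ 8)) ≤ Real.exp (Real.log δ) := Real.exp_le_exp.2 (by linarith)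
      _ = δ := Real.exp_log hδ0
  have hDin : 1000000000 * (n : ℝ) ≤ Di :=
    calc 1000000000 * (n : ℝ) = 2000000000 * n * (1 / 2) := by ring
      _ ≤ 2000000000 * n * Real.log (1 / δ) := by gcongr
      _ ≤ Di := hdi
  -- splitting the sample
  set m : ℕ := ⌈b ^ 12⌉₊ with hm
  have hm1 : b ^ 12 ≤ m := Nat.le_ceil _
  have b12 : (1 : ℝ) ≤ b ^ 12 := one_le_pow₀ (by linarith)
  have hm2 : (m : ℝ) ≤ 2 * b ^ 12 := by
    have := Nat.ceil_lt_add_one (show 0 ≤ b ^ 12 by positivity)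
    linarith
  have hm3 : (m : ℝ) ≤ n / 2 := by
    rw [hbn]
    have : (256 : ℝ) ^ 4 ≤ b ^ 4 := pow_le_pow_left₀ (by norm_num) hb 4
    norm_num at this
    have e : b ^ 16 = b ^ 4 * b ^ 12 := by ring
    rw [e]
    have := mul_le_mul_of_nonneg_right this (show 0 ≤ b ^ 12 by positivity)
    linarith
  have hmn : m ≤ n := by
    have : (m : ℝ) ≤ n := by linarith
    exact_mod_cast this
  obtain ⟨n', hn'⟩ : ∃ n', n' + m = n := ⟨n - m, Nat.sub_add_cancel hmn⟩
  have hn'R : (n' : ℝ) + m = n := by exact_mod_cast hn'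
  let e : Fin n' ⊕ Fin m ≃ Fin n := finSumFinEquiv.trans (finCongr hn')
  let Z' : (Fin n' ⊕ Fin m) × Fin d → Ω → ℝ := fun p ω => y (e p.1) * Z ω (e p.1) p.2
  have hstd0 : StdFam μ (fun (p : Fin n × Fin d) ω => Z ω p.1 p.2) :=
    ⟨fun p => h.meas _ _, h.indep, fun p => h.mean_zero _ _, fun p => h.var_one _ _,
      fun p => h.subg_int _ _, fun p => h.subg _ _⟩
  have hstd : StdFam μ Z' :=
    (hstd0.precomp (g := fun p : (Fin n' ⊕ Fin m) × Fin d => (e p.1, p.2))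
      (fun a c hac => by
        simp only [Prod.mk.injEq, EmbeddingLike.apply_eq_iff_eq] at hac
        exact Prod.ext hac.1 hac.2)).sign (s := fun p => y (e p.1)) (fun p => h.labels _)
  have hsub : {ω | SVPholds (X ω) y} ⊆
      {ω | OpEv (fun i j => Z' (i, j) ω) lam (1 / 100) → BetaEv lam (fun i j => Z' (i, j) ω)} := by
    intro ω hω h1
    refine beta_of_SVP e hl hL (fun i j => ?_) h1 hω
    simp only [Z', h.X_eq]; ring
  -- numeric conditions
  set ρ : ℝ := n / D2 with hρ
  have hρ0 : 0 < ρ := by positivity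
  have hr : ∀ x : ℝ, x * S2 / L ^ 2 = x / D2 := by
    intro x; rw [eD2]; field_simp
  have hρ3 : 3 * ρ ≤ 1 := by
    rw [hρ, ← mul_div_assoc, div_le_one D2pos]; linarith
  set Q : ℝ := n ^ 2 / D2 with hQ
  have hQb : 1000000 * b ^ 15 ≤ Q := by
    rw [hQ, le_div_iff₀ D2pos]
    calc 1000000 * b ^ 15 * D2 ≤ 1000000 * b ^ 15 * (1 / 1000000 * n * b) := by gcongr
      _ = (n : ℝ) ^ 2 := by rw [hbn]; ring
  have hQ1 : 1 ≤ Q := by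
    have : (1 : ℝ) ≤ b ^ 15 := one_le_pow₀ (by linarith)
    linarith
  have hQ2 : Q ≤ (ρ / 24576 * L) ^ 2 / (2 * n * M ^ 2) := by
    have e1 : (ρ / 24576 * L) ^ 2 / (2 * n * M ^ 2) = n * Di ^ 2 / (2 * 24576 ^ 2 * D2 ^ 2) := by
      rw [eDi, hρ]; field_simp
    rw [e1, hQ, div_le_div_iff₀ D2pos (by positivity)]
    have : 2 * 24576 ^ 2 * D2 * n ≤ Di ^ 2 := by
      have := mul_pos D2pos hn0
      norm_num
      linarith
    calc (n : ℝ) ^ 2 * (2 * 24576 ^ 2 * D2 ^ 2) = (n * D2) * (2 * 24576 ^ 2 * D2 * n) := by ring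
      _ ≤ (n * D2) * Di ^ 2 := by gcongr
      _ = _ := by ring
  set p : ℝ := 1 / (4 * b) with hp
  have hp0 : 0 ≤ p := by positivity
  have hple : p ≤ 1 / 4 * Real.exp (-(884736 / ρ)) := by
    have h1 : 884736 / ρ ≤ Real.log b := by
      rw [hρ, div_div_eq_mul_div, div_le_iff₀ hn0]
      have := mul_nonneg hn0.le hlogb1
      linarith
    calc p = 1 / 4 * Real.exp (-(Real.log b)) := by
          rw [Real.exp_neg, Real.exp_log hb0, hp]; field_simp
      _ ≤ _ := by gcongr
  have hpm : 1 ≤ p * m / 4 := by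
    have : (256 : ℝ) ^ 11 ≤ b ^ 11 := pow_le_pow_left₀ (by norm_num) hb 11
    norm_num at this
    have e1 : p * b ^ 12 / 4 = b ^ 11 / 16 := by rw [hp]; field_simp; norm_num
    have e2 : p * b ^ 12 / 4 ≤ p * m / 4 := by gcongr
    linarith
  have hLM : L = Di * M := by rw [eDi]; field_simp
  have hm0 : (0 : ℝ) < m := by linarith
  have hbig : 139264 * M * (m : ℝ) ^ 2 < L * (p * m / 4) := by
    have k1 : 139264 * (m : ℝ) < Di * (p / 4) := by
      have b3 : (256 : ℝ) ^ 3 ≤ b ^ 3 := pow_le_pow_left₀ (by norm_num) hb 3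
      norm_num at b3
      calc 139264 * (m : ℝ) ≤ 139264 * (2 * b ^ 12) := by gcongr
        _ < 1000000000 * b ^ 15 / 16 := by
          have : b ^ 15 = b ^ 3 * b ^ 12 := by ring
          rw [this]
          have := mul_le_mul_of_nonneg_right b3 (show 0 ≤ b ^ 12 by positivity)
          linarith
        _ = (1000000000 * n) * (p / 4) := by rw [hp, hbn]; field_simp; norm_num
        _ ≤ Di * (p / 4) := by gcongr
    calc 139264 * M * (m : ℝ) ^ 2 = (139264 * (m : ℝ)) * (M * m) := by ring
      _ < (Di * (p / 4)) * (M * m) := by gcongr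
      _ = _ := by rw [hLM]; ring
  have hcore := core_prob hstd hl hL hM hM0 hρ0 hρ3 (Q := Q) (p := p) (N := n)
    (by
      rw [hr, hρ, Fintype.card_fin, div_div, mul_comm, ← div_div]
      gcongr
      linarith)
    (by
      rw [hr, hρ, Fintype.card_fin]
      gcongr
      linarith)
    hp0 hple (by rw [Fintype.card_fin]; exact hpm) (by rw [Fintype.card_fin]; exact hbig) hn0
    (by rw [Fintype.card_fin]; linarith) hQ1 hQ2
  have hcard : Fintype.card (Fin n' ⊕ Fin m) = n := by simp [hn']
  rw [hcard, Fintype.card_fin, ← hLdef, ← hS2def] at hcore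
  have hR2 : 1000000000 * (n : ℝ) ≤ S2 / M ^ 2 := by
    have e1 : S2 / M ^ 2 = Di ^ 2 / D2 := by rw [eDi, eD2]; field_simp
    rw [e1, le_div_iff₀ D2pos]
    have := mul_pos D2pos hn0
    linarith
  have hDD : Di ≤ (n : ℝ) ^ 2 := by
    refine hDiD2.trans (hD2b2.trans ?_)
    have : b ≤ n := by
      rw [hbn]; exact le_self_pow₀ (by linarith) (by norm_num)
    rw [pow_two]
    have := mul_le_mul_of_nonneg_left this hn0.le
    have : 0 ≤ (n : ℝ) * b := by positivity
    linarith
  have hnum := numeric (D2 := D2) hb hbn hm1 hDin hR2 hQb hDD hp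
  have f1 : (1 / 400 : ℝ) ^ 2 * L / (1024 * M) = (1 / 400 : ℝ) ^ 2 * Di / 1024 := by
    rw [eDi]; field_simp
  have f2 : (1 / 400 : ℝ) ^ 2 * S2 / (1024 * M ^ 2) = (1 / 400 : ℝ) ^ 2 * (S2 / M ^ 2) / 1024 := by
    field_simp
  rw [f1, f2] at hcore
  exact (measureReal_mono hsub).trans (hcore.trans (hnum.trans hδb))

end SVPproof

/-- Theorem 3: lower bound on the SVP threshold for anisotropic subgaussian samples. -/
theorem stmt9 :
    ∃ C₁ > (0 : ℝ), ∃ C₂ > (0 : ℝ), ∃ C₃ > (0 : ℝ), ∃ C₄ > (0 : ℝ),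
      ∀ (Ω : Type*) (_ : MeasurableSpace Ω) (μ : Measure Ω), IsProbabilityMeasure μ →
      ∀ (n d : ℕ), 0 < n → 0 < d →
      ∀ (lam : Fin d → ℝ) (Z X : Ω → Matrix (Fin n) (Fin d) ℝ) (y : Fin n → ℝ),
        IsAnisoSample μ lam Z X y →
      ∀ δ : ℝ, 0 < δ → δ < 1 / 2 →
        C₁ * (Real.log (1 / δ)) ^ 2 ≤ n →
        dim2 lam ≤ C₂ * n * Real.log n →
        C₃ * n * Real.log (1 / δ) ≤ dimInf lam →
        C₄ * dim2 lam * n ≤ (dimInf lam) ^ 2 →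
        μ {ω | SVPholds (X ω) y} ≤ ENNReal.ofReal δ := by
  refine ⟨2 ^ 130, by norm_num, 1 / 16000000, by norm_num, 2000000000, by norm_num, 2000000000, by norm_num, ?_⟩
  intro Ω _ μ hμ n d hn hd lam Z X y h δ hδ0 hδ h1 h2 h3 h4
  rw [← ofReal_measureReal]
  exact ENNReal.ofReal_le_ofReal (SVPproof.main_bound hd h hδ0 hδ h1 h2 h3 h4)

end
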